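/- Assume that q^i v_j − v_k ≠ 0 in k for all integers i with |i| < n and all 1 ≤ j ≠ k ≤ m, and that 1 + q + ⋯ + q^i ≠ 0 in k for all 1 ≤ i < n. Then there is a family (V^λ), indexed by the m-multipartitions λ of n, of pairwise non-isomorphic simple right H_n(v_1,…,v_m;q)-modules such that every simple right H_n-module is isomorphic to some V^λ, and the k-dimension of V^λ equals the number of standard tableaux of shape λ. -/

import Mathlib

noncomputable section
open scoped Classical
open scoped Fin.NatCast

namespace Cyclo

/-- The defining relations of the cyclotomic Hecke algebra of type `G(m,1,n)`.
Generator `i : Fin n` corresponds to `a_{i+1}` of the paper. -/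
inductive Rel (k : Type) [Field k] (m n : ℕ) (v : Fin m → k) (q : k) :
    FreeAlgebra k (Fin n) → FreeAlgebra k (Fin n) → Prop
  | cyclo (i : Fin n) (hi : i.1 = 0) :
      Rel k m n v q
        ((List.ofFn fun j : Fin m =>
          (FreeAlgebra.ι k i - algebraMap k (FreeAlgebra k (Fin n)) (v j))).prod) 0
  | quad (i : Fin n) (hi : 1 ≤ i.1) :
      Rel k m n v q
        ((FreeAlgebra.ι k i - algebraMap k (FreeAlgebra k (Fin n)) q) * (FreeAlgebra.ι k i + 1)) 0
  | braid0 (i j : Fin n) (hi : i.1 = 0) (hj : j.1 = 1) :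
      Rel k m n v q
        (FreeAlgebra.ι k i * FreeAlgebra.ι k j * FreeAlgebra.ι k i * FreeAlgebra.ι k j)
        (FreeAlgebra.ι k j * FreeAlgebra.ι k i * FreeAlgebra.ι k j * FreeAlgebra.ι k i)
  | comm (i j : Fin n) (h : i.1 + 2 ≤ j.1) :
      Rel k m n v q (FreeAlgebra.ι k i * FreeAlgebra.ι k j)
        (FreeAlgebra.ι k j * FreeAlgebra.ι k i)
  | braid (i j : Fin n) (hi : 1 ≤ i.1) (hj : j.1 = i.1 + 1) :
      Rel k m n v q
        (FreeAlgebra.ι k j * FreeAlgebra.ι k i * FreeAlgebra.ι k j)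
        (FreeAlgebra.ι k i * FreeAlgebra.ι k j * FreeAlgebra.ι k i)

/-- The cyclotomic Hecke algebra `H_n(v_1,…,v_m;q)` of type `G(m,1,n)`. -/
def CH (k : Type) [Field k] (m n : ℕ) (v : Fin m → k) (q : k) : Type :=
  RingQuot (Rel k m n v q)

instance (k : Type) [Field k] (m n : ℕ) (v : Fin m → k) (q : k) : Ring (CH k m n v q) :=
  inferInstanceAs (Ring (RingQuot (Rel k m n v q)))

instance (k : Type) [Field k] (m n : ℕ) (v : Fin m → k) (q : k) : Algebra k (CH k m n v q) :=
  inferInstanceAs (Algebra k (RingQuot (Rel k m n v q)))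

variable (k : Type) [Field k] (m n : ℕ) (v : Fin m → k) (q : k)

/-- `gen k m n v q t` is the generator `a_{t+1}` (so `gen 0 = a_1`, …, `gen (n-1) = a_n`). -/
def gen [NeZero n] (t : ℕ) : CH k m n v q :=
  RingQuot.mkAlgHom k (Rel k m n v q) (FreeAlgebra.ι k ((t : Fin n)))

/-- `murphyAux k m n v q t` is the Murphy element `L_{t+1}`. -/
def murphyAux [NeZero n] : ℕ → CH k m n v q
  | 0 => gen k m n v q 0
  | t + 1 => q⁻¹ • (gen k m n v q (t + 1) * murphyAux t * gen k m n v q (t + 1))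

/-- The Murphy element `L_{i+1}`, for `i : Fin n`. -/
def murphy [NeZero n] (i : Fin n) : CH k m n v q := murphyAux k m n v q i.1

/-- The product of adjacent transpositions encoded by a list of `0`-based indices:
`t` encodes the transposition `(t, t+1)` (in `0`-based labels), i.e. `s_{t+1}` of the paper. -/
def swapProd [NeZero n] (l : List ℕ) : Equiv.Perm (Fin n) :=
  (l.map fun t => Equiv.swap ((t : Fin n)) (((t + 1 : ℕ) : Fin n))).prod

/-- The corresponding product of generators of the Hecke algebra: the index `t`
(encoding `s_{t+1}`) contributes the generator `a_{t+2} = gen (t+1)`. -/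
def genProd [NeZero n] (l : List ℕ) : CH k m n v q :=
  (l.map fun t => gen k m n v q (t + 1)).prod

/-- `l` is a reduced word for the permutation `w`. -/
def IsReducedWord [NeZero n] (l : List ℕ) (w : Equiv.Perm (Fin n)) : Prop :=
  (∀ t ∈ l, t + 1 < n) ∧ swapProd n l = w ∧
    ∀ l' : List ℕ, (∀ t ∈ l', t + 1 < n) → swapProd n l' = w → l.length ≤ l'.length

/-- `aw` assigns to each permutation `w` the element `a_w` computed from a(ny) reduced word. -/
def IsAW [NeZero n] (aw : Equiv.Perm (Fin n) → CH k m n v q) : Prop :=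
  ∀ (w : Equiv.Perm (Fin n)) (l : List ℕ), IsReducedWord n l w → aw w = genProd k m n v q l



/-- An `m`-multipartition of `n`:  `part c` is the partition `λ^{(c+1)}`
(so `c = m-1` corresponds to the component `λ^{(m)}` of the paper), given by its
(weakly decreasing) list of row lengths `part c 0, part c 1, …`. -/
structure Multipartition (m n : ℕ) where
  part : Fin m → ℕ → ℕ
  mono : ∀ c i, part c (i + 1) ≤ part c i
  bound : ∀ c i, n ≤ i → part c i = 0
  total : (∑ c : Fin m, ∑ i ∈ Finset.range n, part c i) = n

namespace Multipartition

variable {m n : ℕ}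

/-- The size `|λ^{(c+1)}|` of a component. -/
def compSize (Λ : Multipartition m n) (c : Fin m) : ℕ :=
  ∑ i ∈ Finset.range n, Λ.part c i

/-- `|λ^{(1)}| + ⋯ + |λ^{(kk)}|`. -/
def compSizeUpto (Λ : Multipartition m n) (kk : ℕ) : ℕ :=
  ∑ c ∈ Finset.range kk, (if h : c < m then Λ.compSize ⟨c, h⟩ else 0)

/-- The statistic `Σ_{j>k}|λ^{(j)}| + Σ_{j=1}^{l} λ^{(k)}_j` of the dominance order,
where the component `k` (`1`-based) is `c.1 + 1`. -/
def domStat (Λ : Multipartition m n) (c : Fin m) (l : ℕ) : ℕ :=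
  (∑ c' ∈ Finset.univ.filter (fun c' : Fin m => c.1 < c'.1), Λ.compSize c') +
    ∑ j ∈ Finset.range l, Λ.part c j

/-- The dominance order `Λ ⊵ M`. -/
def Dominates (Λ M : Multipartition m n) : Prop :=
  ∀ (c : Fin m) (l : ℕ), M.domStat c l ≤ Λ.domStat c l

/-- Strict dominance `Λ ▷ M`. -/
def StrictDom (Λ M : Multipartition m n) : Prop :=
  Λ.Dominates M ∧ Λ ≠ M

/-- The (0-based) entry of the canonical tableau `t^Λ` in the box in row `i`, column `j`
of component `c`: the boxes are filled row by row, starting with the rows of `λ^{(m)}`,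
then those of `λ^{(m-1)}`, and so on. -/
def canonEntry (Λ : Multipartition m n) (c : Fin m) (i j : ℕ) : ℕ :=
  (∑ c' ∈ Finset.univ.filter (fun c' : Fin m => c.1 < c'.1), Λ.compSize c') +
    (∑ i' ∈ Finset.range i, Λ.part c i') + j

end Multipartition

/-- A standard tableau of shape `Λ`, with (0-based) entries `0, …, n-1`:
`entry c i j` is the entry in the box in row `i`, column `j` of component `c`
(and is normalised to `0` outside the boxes of `Λ`). -/
structure StdTableau {m n : ℕ} (Λ : Multipartition m n) where
  entry : Fin m → ℕ → ℕ → ℕ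
  lt_n : ∀ c i j, j < Λ.part c i → entry c i j < n
  inj : ∀ c i j c' i' j', j < Λ.part c i → j' < Λ.part c' i' →
    entry c i j = entry c' i' j' → (c, i, j) = (c', i', j')
  surj : ∀ x, x < n → ∃ c i j, j < Λ.part c i ∧ entry c i j = x
  row : ∀ c i j, j + 1 < Λ.part c i → entry c i j < entry c i (j + 1)
  col : ∀ c i j, j < Λ.part c (i + 1) → entry c i j < entry c (i + 1) j
  outside : ∀ c i j, ¬ j < Λ.part c i → entry c i j = 0

variable (k : Type) [Field k] (m n : ℕ)

/-- `d` assigns to each standard tableau `T` of each shape `Λ` the permutation `d(T)`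
sending, box by box, the entry of the canonical tableau `t^Λ` to the entry of `T`. -/
def IsD [NeZero n] (d : ∀ Λ : Multipartition m n, StdTableau Λ → Equiv.Perm (Fin n)) : Prop :=
  ∀ (Λ : Multipartition m n) (T : StdTableau Λ) (c : Fin m) (i j : ℕ), j < Λ.part c i →
    d Λ T ((Λ.canonEntry c i j : ℕ) : Fin n) = ((T.entry c i j : ℕ) : Fin n)

/-- Membership in the row stabiliser `S_Λ` of the canonical tableau `t^Λ`. -/
def InRowStab [NeZero n] (Λ : Multipartition m n) (w : Equiv.Perm (Fin n)) : Prop :=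
  ∀ (c : Fin m) (i j : ℕ), j < Λ.part c i →
    ∃ j', j' < Λ.part c i ∧
      w ((Λ.canonEntry c i j : ℕ) : Fin n) = ((Λ.canonEntry c i j' : ℕ) : Fin n)


variable (k : Type) [Field k] (m n : ℕ) (v : Fin m → k) (q : k)

open Multipartition

/-- The element `x_Λ = Σ_{w ∈ S_Λ} a_w`, where `aw` computes the elements `a_w`. -/
def xlam [NeZero n] (aw : Equiv.Perm (Fin n) → CH k m n v q) (Λ : Multipartition m n) :
    CH k m n v q :=
  ∑ w : Equiv.Perm (Fin n), if InRowStab m n Λ w then aw w else 0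

/-- `a_kk = n − |λ^{(1)}| − ⋯ − |λ^{(kk)}|`. -/
def aVal (Λ : Multipartition m n) (kk : ℕ) : ℕ := n - Λ.compSizeUpto kk

/-- The element `u_a = ∏_{kk} (L_1 − v_kk)(L_2 − v_kk)⋯(L_{a_kk} − v_kk)`. -/
def ua [NeZero n] (Λ : Multipartition m n) : CH k m n v q :=
  (List.ofFn fun kk : Fin m =>
    (List.ofFn fun ii : Fin n =>
      if ii.1 < aVal m n Λ (kk.1 + 1) then
        murphy k m n v q ii - algebraMap k (CH k m n v q) (v kk)
      else 1).prod).prod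

/-- The element `m_Λ = x_Λ u_a`. -/
def mlam [NeZero n] (aw : Equiv.Perm (Fin n) → CH k m n v q) (Λ : Multipartition m n) :
    CH k m n v q :=
  xlam k m n v q aw Λ * ua k m n v q Λ

/-- The element `m_{st} = a_{d(s)}^* ⬝ m_Λ ⬝ a_{d(t)}`;  here `aw` computes the
elements `a_w`, `σ` is the `*` anti-involution and `d` computes the permutations `d(t)`. -/
def mst [NeZero n] (aw : Equiv.Perm (Fin n) → CH k m n v q) (σ : CH k m n v q →ₗ[k] CH k m n v q)
    (d : ∀ Λ : Multipartition m n, StdTableau Λ → Equiv.Perm (Fin n))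
    {Λ : Multipartition m n} (s t : StdTableau Λ) : CH k m n v q :=
  σ (aw (d Λ s)) * mlam k m n v q aw Λ * aw (d Λ t)

/-- `σ` is the `*` anti-involution: the `k`-linear anti-automorphism fixing the generators. -/
def IsStar [NeZero n] (σ : CH k m n v q →ₗ[k] CH k m n v q) : Prop :=
  σ 1 = 1 ∧ (∀ x y, σ (x * y) = σ y * σ x) ∧ ∀ t, t < n → σ (gen k m n v q t) = gen k m n v q t

/-- The set of elements `m_{uv}`, for `u, v` standard tableaux of a common shape `M ▷ Λ`. -/
def IsetSet [NeZero n] (aw : Equiv.Perm (Fin n) → CH k m n v q)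
    (σ : CH k m n v q →ₗ[k] CH k m n v q)
    (d : ∀ Λ : Multipartition m n, StdTableau Λ → Equiv.Perm (Fin n))
    (Λ : Multipartition m n) : Set (CH k m n v q) :=
  {x | ∃ (M : Multipartition m n) (_ : M.StrictDom Λ) (u v' : StdTableau M),
    x = mst k m n v q aw σ d u v'}

/-- `I_Λ`, the `k`-span of the `m_{uv}` with shape strictly dominating `Λ`. -/
def Ilam [NeZero n] (aw : Equiv.Perm (Fin n) → CH k m n v q)
    (σ : CH k m n v q →ₗ[k] CH k m n v q)
    (d : ∀ Λ : Multipartition m n, StdTableau Λ → Equiv.Perm (Fin n))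
    (Λ : Multipartition m n) : Submodule k (CH k m n v q) :=
  Submodule.span k (IsetSet k m n v q aw σ d Λ)

/-- The image `z_Λ h` of `m_Λ h` in the quotient `H_n / I_Λ`. -/
def zh [NeZero n] (aw : Equiv.Perm (Fin n) → CH k m n v q)
    (σ : CH k m n v q →ₗ[k] CH k m n v q)
    (d : ∀ Λ : Multipartition m n, StdTableau Λ → Equiv.Perm (Fin n))
    (Λ : Multipartition m n) (h : CH k m n v q) :
    CH k m n v q ⧸ Ilam k m n v q aw σ d Λ :=
  Submodule.Quotient.mk (mlam k m n v q aw Λ * h)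

/-- The Specht module `S^Λ = z_Λ ⬝ (H_n/I_Λ)`, as a `k`-submodule of `H_n / I_Λ`. -/
def Specht [NeZero n] (aw : Equiv.Perm (Fin n) → CH k m n v q)
    (σ : CH k m n v q →ₗ[k] CH k m n v q)
    (d : ∀ Λ : Multipartition m n, StdTableau Λ → Equiv.Perm (Fin n))
    (Λ : Multipartition m n) :
    Submodule k (CH k m n v q ⧸ Ilam k m n v q aw σ d Λ) :=
  Submodule.span k (Set.range (zh k m n v q aw σ d Λ))

/-- The generator `z_Λ h` as an element of the Specht module. -/
def zhS [NeZero n] (aw : Equiv.Perm (Fin n) → CH k m n v q)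
    (σ : CH k m n v q →ₗ[k] CH k m n v q)
    (d : ∀ Λ : Multipartition m n, StdTableau Λ → Equiv.Perm (Fin n))
    (Λ : Multipartition m n) (h : CH k m n v q) :
    Specht k m n v q aw σ d Λ :=
  ⟨zh k m n v q aw σ d Λ h, Submodule.subset_span ⟨h, rfl⟩⟩


/-! ### Boxes, lower sets, standard sequences -/

/-- Boxes `(component, row, column)`. -/
abbrev Box (m : ℕ) := Fin m × ℕ × ℕ

/-- Down-closed finite sets of boxes. -/
def IsLow {m : ℕ} (D : Finset (Box m)) : Prop :=
  ∀ c a b, ((c, a + 1, b) ∈ D → (c, a, b) ∈ D) ∧ ((c, a, b + 1) ∈ D → (c, a, b) ∈ D)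

/-- Boxes occupied by the first `r` entries. -/
def pre {m : ℕ} (r : ℕ) (T : ℕ → Box m) : Finset (Box m) := (Finset.range r).image T

/-- `T` is standard up to `r`. -/
def SU {m : ℕ} (r : ℕ) (T : ℕ → Box m) : Prop :=
  (∀ i j, i < r → j < r → T i = T j → i = j) ∧ ∀ s, s ≤ r → IsLow (pre s T)

theorem mem_pre {m r : ℕ} {T : ℕ → Box m} {x : Box m} : x ∈ pre r T ↔ ∃ i, i < r ∧ T i = x := by
  simp [pre]

theorem pre_succ {m r : ℕ} (T : ℕ → Box m) : pre (r + 1) T = insert (T r) (pre r T) := by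
  simp [pre, Finset.range_add_one]

theorem pre_zero {m : ℕ} (T : ℕ → Box m) : pre 0 T = ∅ := by simp [pre]

theorem pre_congr {m r : ℕ} {S T : ℕ → Box m} (h : ∀ i, i < r → S i = T i) :
    pre r S = pre r T := by
  apply Finset.image_congr
  intro i hi
  exact h i (by simpa using hi)

theorem IsLow.empty {m : ℕ} : IsLow (∅ : Finset (Box m)) := by
  intro c a b; simp

theorem IsLow.inter {m : ℕ} {D E : Finset (Box m)} (hD : IsLow D) (hE : IsLow E) :
    IsLow (D ∩ E) := by
  intro c a b
  have := hD c a b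
  have := hE c a b
  simp only [Finset.mem_inter]
  tauto

theorem IsLow.union {m : ℕ} {D E : Finset (Box m)} (hD : IsLow D) (hE : IsLow E) :
    IsLow (D ∪ E) := by
  intro c a b
  have := hD c a b
  have := hE c a b
  simp only [Finset.mem_union]
  tauto

theorem IsLow.le {m : ℕ} {D : Finset (Box m)} (hD : IsLow D) {c : Fin m} {a b a' b' : ℕ}
    (h : (c, a, b) ∈ D) (ha : a' ≤ a) (hb : b' ≤ b) : (c, a', b') ∈ D := by
  have h1 : ∀ d, (c, a - d, b) ∈ D := by
    intro d
    induction d with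
    | zero => simpa using h
    | succ d ih =>
      by_cases h0 : a - d = 0
      · have : a - (d + 1) = a - d := by omega
        rw [this]; exact ih
      · have : a - d = (a - (d + 1)) + 1 := by omega
        rw [this] at ih
        exact (hD _ _ _).1 ih
  have h2 : (c, a', b) ∈ D := by
    have := h1 (a - a')
    rwa [show a - (a - a') = a' by omega] at this
  have h3 : ∀ d, (c, a', b - d) ∈ D := by
    intro d
    induction d with
    | zero => simpa using h2
    | succ d ih =>
      by_cases h0 : b - d = 0
      · have : b - (d + 1) = b - d := by omega
        rw [this]; exact ih
      · have : b - d = (b - (d + 1)) + 1 := by omega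
        rw [this] at ih
        exact (hD _ _ _).2 ih
  have := h3 (b - b')
  rwa [show b - (b - b') = b' by omega] at this

theorem SU.mono {m r s : ℕ} {T : ℕ → Box m} (h : SU r T) (hs : s ≤ r) : SU s T :=
  ⟨fun i j hi hj => h.1 i j (by omega) (by omega), fun t ht => h.2 t (by omega)⟩

theorem SU.congr {m r : ℕ} {S T : ℕ → Box m} (h : SU r S) (hST : ∀ i, i < r → S i = T i) :
    SU r T := by
  refine ⟨fun i j hi hj hij => h.1 i j hi hj ?_, fun s hs => ?_⟩
  · rw [hST i hi, hST j hj, hij]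
  · rw [← pre_congr (fun i hi => hST i (by omega))]
    exact h.2 s hs

theorem SU_zero {m : ℕ} (T : ℕ → Box m) : SU 0 T := by
  refine ⟨by intro i j hi; omega, fun s hs => ?_⟩
  have : s = 0 := by omega
  subst this
  rw [pre_zero]; exact IsLow.empty

theorem SU.card {m r : ℕ} {T : ℕ → Box m} (h : SU r T) : (pre r T).card = r := by
  unfold pre
  rw [Finset.card_image_of_injOn]
  · simp
  · intro i hi j hj hij
    exact h.1 i j (by simpa using hi) (by simpa using hj) hij

theorem SU_succ {m r : ℕ} {T : ℕ → Box m} :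
    SU (r + 1) T ↔ SU r T ∧ T r ∉ pre r T ∧ IsLow (pre (r + 1) T) := by
  constructor
  · intro h
    refine ⟨h.mono (by omega), ?_, h.2 _ le_rfl⟩
    intro hm
    obtain ⟨i, hi, hir⟩ := mem_pre.1 hm
    have := h.1 i r (by omega) (by omega) hir
    omega
  · rintro ⟨h, hm, hl⟩
    refine ⟨?_, ?_⟩
    · intro i j hi hj hij
      by_cases h1 : i = r
      · by_cases h2 : j = r
        · omega
        · exact absurd (mem_pre.2 ⟨j, by omega, by rw [← hij, h1]⟩) hm
      · by_cases h2 : j = r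
        · exact absurd (mem_pre.2 ⟨i, by omega, by rw [hij, h2]⟩) hm
        · exact h.1 i j (by omega) (by omega) hij
    · intro s hs
      by_cases h1 : s = r + 1
      · subst h1; exact hl
      · exact h.2 s (by omega)

/-- Replace the first `r` entries of `Z` by those of `S`. -/
def splice {m : ℕ} (r : ℕ) (S Z : ℕ → Box m) : ℕ → Box m := fun i => if i < r then S i else Z i

theorem splice_lt {m r i : ℕ} {S Z : ℕ → Box m} (h : i < r) : splice r S Z i = S i := by
  simp [splice, h]

theorem splice_ge {m r i : ℕ} {S Z : ℕ → Box m} (h : r ≤ i) : splice r S Z i = Z i := by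
  simp [splice, not_lt.2 h]

theorem pre_splice {m r s : ℕ} {S Z : ℕ → Box m} (h : pre r S = pre r Z) (hs : r ≤ s) :
    pre s (splice r S Z) = pre s Z := by
  induction s, hs using Nat.le_induction with
  | base => rw [← h]; exact pre_congr (fun i hi => splice_lt hi)
  | succ s hs ih => rw [pre_succ, pre_succ, ih, splice_ge hs]

theorem SU_splice {m r n : ℕ} {S Z : ℕ → Box m} (hS : SU r S) (hZ : SU n Z)
    (h : pre r S = pre r Z) (hr : r ≤ n) : SU n (splice r S Z) := by
  induction n, hr using Nat.le_induction with
  | base => exact hS.congr (fun i hi => (splice_lt hi).symm)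
  | succ n hn ih =>
    rw [SU_succ] at hZ ⊢
    rw [pre_splice h hn, pre_splice h (by omega), splice_ge hn]
    exact ⟨ih hZ.1, hZ.2⟩

/-- Swap the entries `i` and `i+1`. -/
def sw {m : ℕ} (i : ℕ) (T : ℕ → Box m) : ℕ → Box m := fun j => T (Equiv.swap i (i + 1) j)

theorem sw_left {m i : ℕ} (T : ℕ → Box m) : sw i T i = T (i + 1) := by simp [sw]
theorem sw_right {m i : ℕ} (T : ℕ → Box m) : sw i T (i + 1) = T i := by simp [sw]
theorem sw_of_ne {m i j : ℕ} (T : ℕ → Box m) (h1 : j ≠ i) (h2 : j ≠ i + 1) : sw i T j = T j := by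
  simp [sw, Equiv.swap_apply_of_ne_of_ne h1 h2]
theorem sw_sw {m i : ℕ} (T : ℕ → Box m) : sw i (sw i T) = T := by
  funext j; simp [sw]

theorem pre_sw_le {m i s : ℕ} (T : ℕ → Box m) (h : s ≤ i) : pre s (sw i T) = pre s T :=
  pre_congr (fun j hj => sw_of_ne T (by omega) (by omega))

theorem pre_sw_ge {m i s : ℕ} (T : ℕ → Box m) (h : i + 2 ≤ s) : pre s (sw i T) = pre s T := by
  induction s, h using Nat.le_induction with
  | base =>
    rw [pre_succ, pre_succ, pre_succ, pre_succ, sw_left, sw_right, pre_sw_le T le_rfl,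
      Finset.insert_comm]
  | succ s hs ih => rw [pre_succ, pre_succ, ih, sw_of_ne T (by omega) (by omega)]

/-- `y` is directly right of `x`, or directly below `x`. -/
def rightOf {m : ℕ} (x : Box m) : Box m := (x.1, x.2.1, x.2.2 + 1)
/-- The box below. -/
def belowOf {m : ℕ} (x : Box m) : Box m := (x.1, x.2.1 + 1, x.2.2)
/-- Adjacency. -/
def Adj {m : ℕ} (x y : Box m) : Prop := y = rightOf x ∨ y = belowOf x

theorem SU_sw {m r i : ℕ} {T : ℕ → Box m} (hT : SU r T) (hi : i + 1 < r)
    (hadj : ¬ Adj (T i) (T (i + 1))) : SU r (sw i T) := by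
  refine ⟨?_, ?_⟩
  · intro j l hj hl hjl
    have hlt : ∀ j, j < r → Equiv.swap i (i + 1) j < r := by
      intro j hj
      rw [Equiv.swap_apply_def]
      split_ifs <;> omega
    exact (Equiv.swap i (i + 1)).injective (hT.1 _ _ (hlt j hj) (hlt l hl) hjl)
  · intro s hs
    rcases Nat.lt_trichotomy s (i + 1) with h | h | h
    · rw [pre_sw_le T (by omega)]; exact hT.2 s hs
    · subst h
      rw [pre_succ, sw_left, pre_sw_le T le_rfl]
      have h1 := hT.2 i (by omega)
      have h2 := hT.2 (i + 2) (by omega)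
      rw [pre_succ, pre_succ] at h2
      intro c a b
      have h3 := h1 c a b
      have h4 := h2 c a b
      simp only [Finset.mem_insert] at h4 ⊢
      refine ⟨?_, ?_⟩
      · rintro (h | h)
        · rcases h4.1 (Or.inl h) with h5 | h5 | h5
          · exact Or.inl h5
          · exact absurd (Or.inr (by rw [← h, ← h5]; rfl)) hadj
          · exact Or.inr h5
        · exact Or.inr (h3.1 h)
      · rintro (h | h)
        · rcases h4.2 (Or.inl h) with h5 | h5 | h5
          · exact Or.inl h5
          · exact absurd (Or.inl (by rw [← h, ← h5]; rfl)) hadj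
          · exact Or.inr h5
        · exact Or.inr (h3.2 h)
    · rw [pre_sw_ge T (by omega)]; exact hT.2 s hs

theorem SU_sw_not {m r i : ℕ} {T : ℕ → Box m} (hT : SU r T) (hi : i + 1 < r)
    (hadj : Adj (T i) (T (i + 1))) : ¬ SU r (sw i T) := by
  intro h
  have h1 := h.2 (i + 1) (by omega)
  rw [pre_succ, sw_left, pre_sw_le T le_rfl] at h1
  have h2 : T i ∉ insert (T (i + 1)) (pre i T) := by
    intro hm
    rcases Finset.mem_insert.1 hm with hm | hm
    · have := hT.1 _ _ (by omega) (by omega) hm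
      omega
    · obtain ⟨j, hj, hji⟩ := mem_pre.1 hm
      have := hT.1 _ _ (by omega) (by omega) hji
      omega
  apply h2
  rcases hadj with h3 | h3
  · apply (h1 (T i).1 (T i).2.1 (T i).2.2).2
    rw [h3]; exact Finset.mem_insert_self _ _
  · apply (h1 (T i).1 (T i).2.1 (T i).2.2).1
    rw [h3]; exact Finset.mem_insert_self _ _

theorem SU.exists_lt {m r j : ℕ} {T : ℕ → Box m} (hT : SU r T) (hj : j < r) {c : Fin m}
    {a b a' b' : ℕ} (h : T j = (c, a, b)) (ha : a' ≤ a) (hb : b' ≤ b) (hne : a' ≠ a ∨ b' ≠ b) :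
    ∃ i, i < j ∧ T i = (c, a', b') := by
  have h1 : (c, a, b) ∈ pre (j + 1) T := mem_pre.2 ⟨j, by omega, h⟩
  have h2 := (hT.2 (j + 1) (by omega)).le h1 ha hb
  obtain ⟨i, hi, hi2⟩ := mem_pre.1 h2
  refine ⟨i, ?_, hi2⟩
  rcases Nat.lt_or_ge i j with h3 | h3
  · exact h3
  · have : i = j := by omega
    subst this
    rw [h] at hi2
    simp only [Prod.mk.injEq, true_and] at hi2
    omega

theorem SU.not_le {m r i j : ℕ} {T : ℕ → Box m} (hT : SU r T) (hj : j < r) (hij : i < j)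
    {c : Fin m} {a b a' b' : ℕ} (hi' : T i = (c, a, b)) (hj' : T j = (c, a', b')) :
    ¬ (a' ≤ a ∧ b' ≤ b) := by
  rintro ⟨h1, h2⟩
  by_cases h : a' ≠ a ∨ b' ≠ b
  · obtain ⟨l, hl, hl2⟩ := hT.exists_lt (by omega) hi' h1 h2 h
    have := hT.1 l j (by omega) hj (by rw [hl2, hj'])
    omega
  · push Not at h
    have := hT.1 i j (by omega) hj (by rw [hi', hj', h.1, h.2])
    omega

theorem SU.far {m r i j : ℕ} {T : ℕ → Box m} (hT : SU r T) (hj : j < r) (hij : i < j)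
    {c : Fin m} {a b a' b' : ℕ} (hi' : T i = (c, a, b)) (hj' : T j = (c, a', b'))
    (ha : a < a') (hb : b < b') : i + 3 ≤ j := by
  obtain ⟨j1, h1, h1'⟩ := hT.exists_lt hj hj' (a' := a') (b' := b' - 1) (by omega) (by omega)
    (by omega)
  obtain ⟨j2, h2, h2'⟩ := hT.exists_lt hj hj' (a' := a' - 1) (b' := b') (by omega) (by omega)
    (by omega)
  obtain ⟨i1, h3, h3'⟩ := hT.exists_lt (by omega) h1' (a' := a) (b' := b) (by omega) (by omega)
    (by omega)
  obtain ⟨i2, h4, h4'⟩ := hT.exists_lt (by omega) h2' (a' := a) (b' := b) (by omega) (by omega)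
    (by omega)
  have e1 := hT.1 i1 i (by omega) (by omega) (by rw [h3', hi'])
  have e2 := hT.1 i2 i (by omega) (by omega) (by rw [h4', hi'])
  have : j1 ≠ j2 := by
    rintro rfl
    rw [h1'] at h2'
    simp only [Prod.mk.injEq, true_and] at h2'
    omega
  omega

/-- The content of a box. -/
def ct {m : ℕ} (x : Box m) : ℤ := (x.2.2 : ℤ) - (x.2.1 : ℤ)

theorem ct_hit {m : ℕ} {D : Finset (Box m)} (hD : IsLow D) {x : Box m} (hx : x ∈ D) {t : ℤ}
    (h1 : min 0 (ct x) ≤ t) (h2 : t ≤ max 0 (ct x)) :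
    (x.1, t) ∈ D.image (fun y : Box m => (y.1, ct y)) := by
  obtain ⟨c, a, b⟩ := x
  simp only [ct] at h1 h2
  rw [Finset.mem_image]
  rcases le_total 0 t with ht | ht
  · refine ⟨(c, 0, t.toNat), hD.le hx (by omega) (by omega), ?_⟩
    simp [ct, ht]
  · refine ⟨(c, (-t).toNat, 0), hD.le hx (by omega) (by omega), ?_⟩
    simp [ct, ht]

theorem ct_same {m : ℕ} {D : Finset (Box m)} (hD : IsLow D) {x y : Box m} (hx : x ∈ D)
    (hy : y ∈ D) (hxy : x.1 = y.1) : (ct y - ct x).natAbs + 1 ≤ D.card := by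
  have key : ∀ x y : Box m, x ∈ D → y ∈ D → x.1 = y.1 → ct x ≤ ct y →
      (ct y - ct x).natAbs + 1 ≤ D.card := by
    intro x y hx hy hxy hle
    have hsub : (Finset.Icc (ct x) (ct y)).image (fun t => (x.1, t)) ⊆
        D.image (fun y : Box m => (y.1, ct y)) := by
      intro p hp
      obtain ⟨t, ht, rfl⟩ := Finset.mem_image.1 hp
      rw [Finset.mem_Icc] at ht
      rcases le_total 0 t with h0 | h0
      · rw [hxy]; exact ct_hit hD hy (by omega) (by omega)
      · exact ct_hit hD hx (by omega) (by omega)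
    have h1 := Finset.card_le_card hsub
    rw [Finset.card_image_of_injective _ (fun a b h => by simpa using h)] at h1
    have h2 := h1.trans Finset.card_image_le
    rw [Int.card_Icc] at h2
    omega
  rcases le_total (ct x) (ct y) with h | h
  · exact key x y hx hy hxy h
  · have := key y x hy hx hxy.symm h
    omega

theorem ct_diff {m : ℕ} {D : Finset (Box m)} (hD : IsLow D) {x y : Box m} (hx : x ∈ D)
    (hy : y ∈ D) (hxy : x.1 ≠ y.1) : (ct y - ct x).natAbs + 2 ≤ D.card := by
  have hsub : (Finset.Icc (min 0 (ct x)) (max 0 (ct x))).image (fun t => (x.1, t)) ∪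
      (Finset.Icc (min 0 (ct y)) (max 0 (ct y))).image (fun t => (y.1, t)) ⊆
        D.image (fun y : Box m => (y.1, ct y)) := by
    intro p hp
    rcases Finset.mem_union.1 hp with hp | hp
    · obtain ⟨t, ht, rfl⟩ := Finset.mem_image.1 hp
      rw [Finset.mem_Icc] at ht
      exact ct_hit hD hx ht.1 ht.2
    · obtain ⟨t, ht, rfl⟩ := Finset.mem_image.1 hp
      rw [Finset.mem_Icc] at ht
      exact ct_hit hD hy ht.1 ht.2
  have h1 := (Finset.card_le_card hsub).trans Finset.card_image_le
  rw [Finset.card_union_of_disjoint,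
    Finset.card_image_of_injective _ (fun a b h => by simpa using h),
    Finset.card_image_of_injective _ (fun a b h => by simpa using h),
    Int.card_Icc, Int.card_Icc] at h1
  · omega
  · rw [Finset.disjoint_left]
    intro p hp hp'
    obtain ⟨t, _, rfl⟩ := Finset.mem_image.1 hp
    obtain ⟨t', _, h⟩ := Finset.mem_image.1 hp'
    exact hxy (congrArg Prod.fst h).symm

/-- Separation of two boxes, as needed for the seminormal coefficients. -/
def Sep {m : ℕ} (n : ℕ) (x y : Box m) : Prop :=
  (x.1 = y.1 → ct y - ct x ≠ 0 ∧ (ct y - ct x).natAbs < n) ∧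
    (x.1 ≠ y.1 → (ct y - ct x).natAbs + 2 ≤ n)

theorem Sep.symm {m n : ℕ} {x y : Box m} (h : Sep n x y) : Sep n y x := by
  refine ⟨fun e => ?_, fun e => ?_⟩
  · have := h.1 e.symm; omega
  · have := h.2 (Ne.symm e); omega

theorem SU.sep {m n i j : ℕ} {T : ℕ → Box m} (hT : SU n T) (hj : j < n) (hij : i < j)
    (hji : j ≤ i + 2) : Sep n (T i) (T j) := by
  have hi : T i ∈ pre n T := mem_pre.2 ⟨i, by omega, rfl⟩
  have hj' : T j ∈ pre n T := mem_pre.2 ⟨j, by omega, rfl⟩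
  refine ⟨fun e => ⟨?_, ?_⟩, fun e => ?_⟩
  · obtain ⟨⟨c, a, b⟩, h1⟩ : ∃ x, x = T i := ⟨_, rfl⟩
    obtain ⟨⟨c', a', b'⟩, h2⟩ : ∃ x, x = T j := ⟨_, rfl⟩
    rw [← h1, ← h2] at e ⊢
    simp only at e
    subst e
    have f1 := hT.not_le hj hij h1.symm h2.symm
    have f2 := hT.far hj hij h1.symm h2.symm
    simp only [ct]
    omega
  · have := ct_same (hT.2 n le_rfl) hi hj' e
    rw [hT.card] at this
    omega
  · have := ct_diff (hT.2 n le_rfl) hi hj' e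
    rwa [hT.card] at this

theorem SU.adj_of_ct {m n i : ℕ} {T : ℕ → Box m} (hT : SU n T) (hj : i + 1 < n)
    (e : (T i).1 = (T (i + 1)).1)
    (h : ct (T (i + 1)) - ct (T i) = 1 ∨ ct (T (i + 1)) - ct (T i) = -1) :
    Adj (T i) (T (i + 1)) := by
  obtain ⟨⟨c, a, b⟩, h1⟩ : ∃ x, x = T i := ⟨_, rfl⟩
  obtain ⟨⟨c', a', b'⟩, h2⟩ : ∃ x, x = T (i + 1) := ⟨_, rfl⟩
  rw [← h1, ← h2] at e h ⊢
  simp only at e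
  subst e
  have f1 := hT.not_le hj (by omega) h1.symm h2.symm
  have f2 := hT.far hj (by omega) h1.symm h2.symm
  simp only [ct] at h
  simp only [Adj, rightOf, belowOf, Prod.mk.injEq, true_and]
  omega

theorem exists_SU {m : ℕ} (d : Box m) (r : ℕ) : ∀ D : Finset (Box m), IsLow D → D.card = r →
    ∃ T : ℕ → Box m, SU r T ∧ pre r T = D ∧ ∀ i, r ≤ i → T i = d := by
  induction r with
  | zero =>
    intro D _ hc
    refine ⟨fun _ => d, SU_zero _, ?_, fun _ _ => rfl⟩
    rw [pre_zero, Finset.card_eq_zero.1 hc]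
  | succ r ih =>
    intro D hD hc
    have hne : D.Nonempty := by rw [← Finset.card_pos]; omega
    obtain ⟨x, hx, hmax⟩ := D.exists_max_image (fun x => x.2.1 + x.2.2) hne
    have hlow : IsLow (D.erase x) := by
      intro c a b
      simp only [Finset.mem_erase]
      refine ⟨fun h => ⟨?_, (hD c a b).1 h.2⟩, fun h => ⟨?_, (hD c a b).2 h.2⟩⟩
      · rintro rfl
        have := hmax _ h.2
        simp only at this
        omega
      · rintro rfl
        have := hmax _ h.2
        simp only at this
        omega
    obtain ⟨T, h1, h2, h3⟩ := ih (D.erase x) hlow (by rw [Finset.card_erase_of_mem hx]; omega)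
    have hagree : ∀ i, i < r → T i = Function.update T r x i := by
      intro i hi
      rw [Function.update_of_ne (by omega)]
    have hp : pre r (Function.update T r x) = D.erase x := by rw [← h2, pre_congr hagree]
    have hp' : pre (r + 1) (Function.update T r x) = D := by
      rw [pre_succ, hp, Function.update_self, Finset.insert_erase hx]
    refine ⟨Function.update T r x, SU_succ.2 ⟨h1.congr hagree, ?_, ?_⟩, hp', ?_⟩
    · rw [hp, Function.update_self]; simp
    · rw [hp']; exact hD
    · intro i hi
      rw [Function.update_of_ne (by omega)]
      exact h3 i (by omega)

/-! ### Seminormal coefficients -/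

section Coeff

variable {F : Type} [Field F] {m : ℕ}

/-- The `q`-integer. -/
def qi (q : F) (d : ℤ) : F := if q = 1 then (d : F) else (q ^ d - 1) / (q - 1)

theorem qi_pow {q : F} (d : ℤ) : q ^ d = 1 + (q - 1) * qi q d := by
  unfold qi
  split_ifs with h
  · simp [h]
  · have : q - 1 ≠ 0 := sub_ne_zero.2 h
    field_simp
    ring

theorem qi_add {q : F} (hq : q ≠ 0) (a b : ℤ) : qi q (a + b) = qi q a + q ^ a * qi q b := by
  unfold qi
  split_ifs with h
  · simp [h]
  · have : q - 1 ≠ 0 := sub_ne_zero.2 h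
    rw [zpow_add₀ hq]
    field_simp
    ring

theorem qi_zero (q : F) : qi q 0 = 0 := by simp [qi]
theorem qi_one (q : F) : qi q 1 = 1 := by
  unfold qi
  split_ifs with h
  · simp
  · have : q - 1 ≠ 0 := sub_ne_zero.2 h
    field_simp

theorem qi_neg {q : F} (hq : q ≠ 0) (a : ℤ) : qi q a = - (q ^ a * qi q (-a)) := by
  have := qi_add hq a (-a)
  rw [add_neg_cancel, qi_zero] at this
  exact eq_neg_of_add_eq_zero_left this.symm

theorem qi_nat {q : F} (d : ℕ) : qi q d = ∑ j ∈ Finset.range d, q ^ j := by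
  unfold qi
  split_ifs with h
  · simp [h]
  · rw [geom_sum_eq h]; simp

theorem qi_ne {q : F} (hq : q ≠ 0) {n : ℕ}
    (h2 : ∀ i : ℕ, 1 ≤ i → i < n → (∑ j ∈ Finset.range (i + 1), q ^ j) ≠ 0) {d : ℤ}
    (hd : d ≠ 0) (hdn : d.natAbs ≤ n) : qi q d ≠ 0 := by
  have key : ∀ e : ℕ, e ≠ 0 → e ≤ n → qi q (e : ℤ) ≠ 0 := by
    intro e he hen
    rw [qi_nat]
    by_cases h1 : e = 1
    · subst h1; simp
    · obtain ⟨e', rfl⟩ : ∃ e', e = e' + 1 := ⟨e - 1, by omega⟩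
      exact h2 e' (by omega) (by omega)
  rcases le_total 0 d with h | h
  · obtain ⟨e, rfl⟩ := Int.eq_ofNat_of_zero_le h
    exact key e (by omega) (by omega)
  · rw [qi_neg hq]
    obtain ⟨e, he⟩ := Int.eq_ofNat_of_zero_le (a := -d) (by omega)
    rw [he]
    exact neg_ne_zero.2 (mul_ne_zero (zpow_ne_zero _ hq) (key e (by omega) (by omega)))

/-- Residue of a box. -/
def res (v : Fin m → F) (q : F) (x : Box m) : F := v x.1 * q ^ (ct x)

/-- Diagonal seminormal coefficient. -/
def al (v : Fin m → F) (q : F) (x y : Box m) : F :=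
  if x.1 = y.1 then q - 1 + (qi q (ct y - ct x))⁻¹
  else (q - 1) * res v q y / (res v q y - res v q x)

/-- Off-diagonal seminormal coefficient. -/
def be (v : Fin m → F) (q : F) (x y : Box m) : F :=
  if Adj x y then 0 else if Adj y x then 1 else 1 + al v q x y

theorem al_right (v : Fin m → F) (q : F) (x : Box m) : al v q x (rightOf x) = q := by
  have : ct (rightOf x) - ct x = 1 := by simp [ct, rightOf]
  simp [al, this, qi_one]
  simp [rightOf]

theorem al_below (v : Fin m → F) {q : F} (hq : q ≠ 0) (x : Box m) :
    al v q x (belowOf x) = -1 := by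
  have : ct (belowOf x) - ct x = -1 := by simp [ct, belowOf]
  have h2 : qi q (-1) = - q⁻¹ := by
    rw [qi_neg hq]; simp [qi_one]
  unfold al
  rw [this, h2, if_pos (by rfl)]
  field_simp
  ring

theorem res_shift (v : Fin m → F) {q : F} (hq : q ≠ 0) {x y : Box m} (h : x.1 = y.1) :
    res v q y = res v q x * (1 + (q - 1) * qi q (ct y - ct x)) := by
  rw [← qi_pow]
  unfold res
  rw [h, mul_assoc, ← zpow_add₀ hq]
  congr 2
  ring

theorem res_ne {v : Fin m → F} {q : F} (hq : q ≠ 0) {n : ℕ}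
    (h1 : ∀ i : ℤ, i.natAbs < n → ∀ j j' : Fin m, j ≠ j' → q ^ i * v j - v j' ≠ 0)
    {x y : Box m} (hxy : x.1 ≠ y.1) {e : ℤ} (he : (ct y + e - ct x).natAbs < n) :
    q ^ e * res v q y - res v q x ≠ 0 := by
  have := h1 (ct y + e - ct x) he y.1 x.1 (Ne.symm hxy)
  intro h
  apply this
  have h3 : q ^ (ct x) ≠ 0 := zpow_ne_zero _ hq
  have h4 : (q ^ (ct y + e - ct x) * v y.1 - v x.1) * q ^ (ct x) = 0 := by
    rw [sub_mul, mul_right_comm, ← zpow_add₀ hq, sub_add_cancel, zpow_add₀ hq, ← h]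
    unfold res
    ring
  exact (mul_eq_zero.1 h4).resolve_right h3

variable {v : Fin m → F} {q : F} {n : ℕ} (hq : q ≠ 0)
  (h1 : ∀ i : ℤ, i.natAbs < n → ∀ j j' : Fin m, j ≠ j' → q ^ i * v j - v j' ≠ 0)
  (h2 : ∀ i : ℕ, 1 ≤ i → i < n → (∑ j ∈ Finset.range (i + 1), q ^ j) ≠ 0)

theorem Sep.res_ne (hq : q ≠ 0)
    (h1 : ∀ i : ℤ, i.natAbs < n → ∀ j j' : Fin m, j ≠ j' → q ^ i * v j - v j' ≠ 0)
    {x y : Box m} (h : Sep n x y) (hxy : x.1 ≠ y.1) :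
    res v q y - res v q x ≠ 0 := by
  have := h.2 hxy
  have := Cyclo.res_ne (e := 0) hq h1 hxy (by omega)
  simpa using this

theorem al_add (hq : q ≠ 0)
    (h1 : ∀ i : ℤ, i.natAbs < n → ∀ j j' : Fin m, j ≠ j' → q ^ i * v j - v j' ≠ 0)
    (h2 : ∀ i : ℕ, 1 ≤ i → i < n → (∑ j ∈ Finset.range (i + 1), q ^ j) ≠ 0)
    {x y : Box m} (h : Sep n x y) : al v q x y + al v q y x = q - 1 := by
  unfold al
  by_cases e : x.1 = y.1
  · rw [if_pos e, if_pos e.symm]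
    obtain ⟨hd, hd'⟩ := h.1 e
    have n1 := qi_ne hq h2 hd (by omega)
    have n2 := qi_ne hq h2 (d := ct x - ct y) (by omega) (by omega)
    have := qi_neg hq (ct y - ct x)
    rw [qi_pow, neg_sub] at this
    field_simp
    linear_combination this
  · rw [if_neg e, if_neg (Ne.symm e)]
    have n1 := h.res_ne hq h1 e
    have n2 := h.symm.res_ne hq h1 (Ne.symm e)
    field_simp
    ring

theorem al_cocycle (hq : q ≠ 0)
    (h1 : ∀ i : ℤ, i.natAbs < n → ∀ j j' : Fin m, j ≠ j' → q ^ i * v j - v j' ≠ 0)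
    (h2 : ∀ i : ℕ, 1 ≤ i → i < n → (∑ j ∈ Finset.range (i + 1), q ^ j) ≠ 0)
    {x y z : Box m} (hxy : Sep n x y) (hyz : Sep n y z) (hxz : Sep n x z) :
    al v q x y * al v q y z = al v q x z * (al v q x y + al v q y z - (q - 1)) := by
  unfold al
  by_cases e : x.1 = y.1
  · by_cases e' : y.1 = z.1
    · rw [if_pos e, if_pos e', if_pos (e.trans e')]
      have n1 := qi_ne hq h2 (hxy.1 e).1 (by have := (hxy.1 e).2; omega)
      have n2 := qi_ne hq h2 (hyz.1 e').1 (by have := (hyz.1 e').2; omega)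
      have n3 := qi_ne hq h2 (hxz.1 (e.trans e')).1 (by have := (hxz.1 (e.trans e')).2; omega)
      have := qi_add hq (ct y - ct x) (ct z - ct y)
      rw [qi_pow, show ct y - ct x + (ct z - ct y) = ct z - ct x by ring] at this
      generalize qi q (ct y - ct x) = D at *
      generalize qi q (ct z - ct y) = E at *
      generalize qi q (ct z - ct x) = G at *
      field_simp
      linear_combination this
    · have e'' : x.1 ≠ z.1 := by rw [e]; exact e'
      rw [if_pos e, if_neg e', if_neg e'']
      have n1 := qi_ne hq h2 (hxy.1 e).1 (by have := (hxy.1 e).2; omega)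
      have n2 := hyz.res_ne hq h1 e'
      have n3 := hxz.res_ne hq h1 e''
      have := res_shift v hq e
      rw [this] at n2 ⊢
      generalize qi q (ct y - ct x) = D at *
      field_simp
      ring
  · by_cases e' : y.1 = z.1
    · have e'' : x.1 ≠ z.1 := by rw [← e']; exact e
      rw [if_neg e, if_pos e', if_neg e'']
      have n1 := qi_ne hq h2 (hyz.1 e').1 (by have := (hyz.1 e').2; omega)
      have n2 := hxy.res_ne hq h1 e
      have n3 := hxz.res_ne hq h1 e''
      have := res_shift v hq e'
      rw [this] at n3 ⊢
      generalize qi q (ct z - ct y) = D at *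
      field_simp
      ring
    · by_cases e'' : x.1 = z.1
      · rw [if_neg e, if_neg e', if_pos e'']
        have n1 := qi_ne hq h2 (hxz.1 e'').1 (by have := (hxz.1 e'').2; omega)
        have n2 := hxy.res_ne hq h1 e
        have n3 := hyz.res_ne hq h1 e'
        have := res_shift v hq e''
        rw [this] at n3 ⊢
        generalize qi q (ct z - ct x) = D at *
        field_simp
        ring
      · rw [if_neg e, if_neg e', if_neg e'']
        have n1 := hxy.res_ne hq h1 e
        have n2 := hyz.res_ne hq h1 e'
        have n3 := hxz.res_ne hq h1 e''
        field_simp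
        ring

theorem be_mul (hq : q ≠ 0)
    (h1 : ∀ i : ℤ, i.natAbs < n → ∀ j j' : Fin m, j ≠ j' → q ^ i * v j - v j' ≠ 0)
    (h2 : ∀ i : ℕ, 1 ≤ i → i < n → (∑ j ∈ Finset.range (i + 1), q ^ j) ≠ 0)
    {x y : Box m} (h : Sep n x y) :
    be v q x y * be v q y x = (1 + al v q x y) * (q - al v q x y) := by
  have hs := al_add hq h1 h2 h
  unfold be
  by_cases a1 : Adj x y
  · rw [if_pos a1]
    rcases a1 with rfl | rfl
    · rw [al_right]; ring
    · rw [al_below v hq]; ring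
  · by_cases a2 : Adj y x
    · rw [if_neg a1, if_pos a2, if_pos a2]
      rcases a2 with rfl | rfl
      · rw [al_right] at hs; linear_combination (-(q - al v q (rightOf y) y)) * hs
      · rw [al_below v hq] at hs; linear_combination (1 + al v q (belowOf y) y) * hs
    · rw [if_neg a1, if_neg a2, if_neg a2, if_neg a1]
      linear_combination (1 + al v q x y) * hs

theorem be_adj (v : Fin m → F) (q : F) {x y : Box m} (h : Adj x y) : be v q x y = 0 := by
  rw [be, if_pos h]

theorem be_ne (hq : q ≠ 0)
    (h1 : ∀ i : ℤ, i.natAbs < n → ∀ j j' : Fin m, j ≠ j' → q ^ i * v j - v j' ≠ 0)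
    (h2 : ∀ i : ℕ, 1 ≤ i → i < n → (∑ j ∈ Finset.range (i + 1), q ^ j) ≠ 0)
    {x y : Box m} (h : Sep n x y) (ha : ¬ Adj x y)
    (hne : x.1 = y.1 → ct y - ct x ≠ -1) : be v q x y ≠ 0 := by
  rw [be, if_neg ha]
  split_ifs with hb
  · exact one_ne_zero
  · unfold al
    split_ifs with e
    · obtain ⟨d1, d2⟩ := h.1 e
      have d3 := hne e
      have n1 := qi_ne hq h2 d1 (by omega)
      have n2 := qi_ne hq h2 (d := ct y - ct x + 1) (by omega) (by omega)
      rw [add_comm (ct y - ct x) 1, qi_add hq, qi_one, zpow_one] at n2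
      intro h0
      apply n2
      have : (1 + (q - 1 + (qi q (ct y - ct x))⁻¹)) * qi q (ct y - ct x) = 0 := by
        rw [h0, zero_mul]
      rw [← this]
      field_simp
      ring
    · have n1 := h.res_ne hq h1 e
      have d := h.2 e
      have n2 := res_ne (e := 1) hq h1 e (by omega)
      rw [zpow_one] at n2
      intro h0
      apply n2
      have : (1 + (q - 1) * res v q y / (res v q y - res v q x)) *
        (res v q y - res v q x) = 0 := by rw [h0, zero_mul]
      rw [← this]
      field_simp
      ring

end Coeff

/-! ### The seminormal representation -/

section Repr

variable {F : Type} [Field F] {m : ℕ}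

/-- The operators on the free module on all sequences of boxes. -/
def opN (v : Fin m → F) (q : F) : ℕ → ((ℕ → Box m) →₀ F) →ₗ[F] ((ℕ → Box m) →₀ F)
  | 0 => Finsupp.linearCombination F (fun T => v (T 0).1 • Finsupp.single T (1 : F))
  | i + 1 => Finsupp.linearCombination F (fun T =>
      al v q (T i) (T (i + 1)) • Finsupp.single T (1 : F) +
      be v q (T i) (T (i + 1)) • Finsupp.single (sw i T) (1 : F))

/-- Basis vectors. -/
def eN (F : Type) [Field F] {m : ℕ} (T : ℕ → Box m) : (ℕ → Box m) →₀ F := Finsupp.single T 1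

theorem opN_zero (v : Fin m → F) (q : F) (T : ℕ → Box m) :
    opN v q 0 (eN F T) = v (T 0).1 • eN F T := by
  simp [opN, eN]

theorem opN_succ (v : Fin m → F) (q : F) (i : ℕ) (T : ℕ → Box m) :
    opN v q (i + 1) (eN F T) = al v q (T i) (T (i + 1)) • eN F T +
      be v q (T i) (T (i + 1)) • eN F (sw i T) := by
  simp [opN, eN]

theorem sw_braid (i : ℕ) (T : ℕ → Box m) :
    sw i (sw (i + 1) (sw i T)) = sw (i + 1) (sw i (sw (i + 1) T)) := by
  funext j
  simp only [sw]
  congr 1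
  simp only [Equiv.swap_apply_def]
  split_ifs <;> omega

theorem sw_comm {i j : ℕ} (h : i + 2 ≤ j) (T : ℕ → Box m) :
    sw i (sw j T) = sw j (sw i T) := by
  funext l
  simp only [sw]
  congr 1
  simp only [Equiv.swap_apply_def]
  split_ifs <;> omega

variable {v : Fin m → F} {q : F} {n : ℕ}

theorem opN_quad (hq : q ≠ 0)
    (h1 : ∀ i : ℤ, i.natAbs < n → ∀ j j' : Fin m, j ≠ j' → q ^ i * v j - v j' ≠ 0)
    (h2 : ∀ i : ℕ, 1 ≤ i → i < n → (∑ j ∈ Finset.range (i + 1), q ^ j) ≠ 0)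
    {T : ℕ → Box m} (hT : SU n T) {i : ℕ} (hi : i + 1 < n) :
    opN v q (i + 1) (opN v q (i + 1) (eN F T)) =
      (q - 1) • opN v q (i + 1) (eN F T) + q • eN F T := by
  have hs : Sep n (T i) (T (i + 1)) := hT.sep hi (by omega) (by omega)
  have e1 := al_add hq h1 h2 hs
  have e2 := be_mul hq h1 h2 hs
  simp only [opN_succ, map_add, map_smul, sw_left, sw_right, sw_sw]
  generalize eN F T = a at *
  generalize eN F (sw i T) = b at *
  generalize al v q (T i) (T (i + 1)) = A at *
  generalize al v q (T (i + 1)) (T i) = A' at *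
  generalize be v q (T i) (T (i + 1)) = B at *
  generalize be v q (T (i + 1)) (T i) = B' at *
  match_scalars
  · linear_combination e2
  · linear_combination B * e1

theorem opN_braid (hq : q ≠ 0)
    (h1 : ∀ i : ℤ, i.natAbs < n → ∀ j j' : Fin m, j ≠ j' → q ^ i * v j - v j' ≠ 0)
    (h2 : ∀ i : ℕ, 1 ≤ i → i < n → (∑ j ∈ Finset.range (i + 1), q ^ j) ≠ 0)
    {T : ℕ → Box m} (hT : SU n T) {i : ℕ} (hi : i + 2 < n) :
    opN v q (i + 1) (opN v q (i + 2) (opN v q (i + 1) (eN F T))) =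
      opN v q (i + 2) (opN v q (i + 1) (opN v q (i + 2) (eN F T))) := by
  have hs1 : Sep n (T i) (T (i + 1)) := hT.sep (by omega) (by omega) (by omega)
  have hs2 : Sep n (T (i + 1)) (T (i + 2)) := hT.sep (by omega) (by omega) (by omega)
  have hs3 : Sep n (T i) (T (i + 2)) := hT.sep (by omega) (by omega) (by omega)
  have c := al_cocycle hq h1 h2 hs1 hs2 hs3
  have e1 := al_add hq h1 h2 hs1
  have e2 := be_mul hq h1 h2 hs1
  have f1 := al_add hq h1 h2 hs2
  have f2 := be_mul hq h1 h2 hs2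
  have s1 : ∀ T : ℕ → Box m, sw i T (i + 2) = T (i + 2) :=
    fun T => sw_of_ne T (by omega) (by omega)
  have s2 : ∀ T : ℕ → Box m, sw (i + 1) T i = T i :=
    fun T => sw_of_ne T (by omega) (by omega)
  have s3 : ∀ T : ℕ → Box m, sw (i + 1) T (i + 2) = T (i + 1) := fun T => sw_right T
  have s4 : ∀ T : ℕ → Box m, sw (i + 1) T (i + 1) = T (i + 2) := fun T => sw_left T
  have o2 : ∀ T : ℕ → Box m, opN v q (i + 2) (eN F T) =
      al v q (T (i + 1)) (T (i + 2)) • eN F T +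
      be v q (T (i + 1)) (T (i + 2)) • eN F (sw (i + 1) T) := fun T => opN_succ v q (i + 1) T
  simp only [opN_succ, o2, map_add, map_smul, sw_left, sw_right, sw_sw, s1, s2, s3, s4, sw_braid]
  generalize eN F T = a0 at *
  generalize eN F (sw i T) = a1 at *
  generalize eN F (sw (i + 1) T) = a2 at *
  generalize eN F (sw i (sw (i + 1) T)) = a3 at *
  generalize eN F (sw (i + 1) (sw i T)) = a4 at *
  generalize eN F (sw (i + 1) (sw i (sw (i + 1) T))) = a5 at *
  generalize al v q (T i) (T (i + 1)) = A at *
  generalize al v q (T (i + 1)) (T i) = A' at *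
  generalize be v q (T i) (T (i + 1)) = B at *
  generalize be v q (T (i + 1)) (T i) = B' at *
  generalize al v q (T (i + 1)) (T (i + 2)) = C at *
  generalize al v q (T (i + 2)) (T (i + 1)) = C' at *
  generalize be v q (T (i + 1)) (T (i + 2)) = E at *
  generalize be v q (T (i + 2)) (T (i + 1)) = E' at *
  generalize al v q (T i) (T (i + 2)) = G at *
  generalize be v q (T i) (T (i + 2)) = H at *
  match_scalars
  · linear_combination (A - C) * c + G * e2 - G * f2
  · linear_combination B * c + B * G * e1
  · linear_combination -E * c - E * G * f1
  all_goals ring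

theorem opN_comm0 {j : ℕ} (T : ℕ → Box m) :
    opN v q 0 (opN v q (j + 2) (eN F T)) = opN v q (j + 2) (opN v q 0 (eN F T)) := by
  simp only [opN_succ, opN_zero, map_add, map_smul]
  rw [sw_of_ne T (by omega) (by omega)]
  module

theorem opN_comm {i j : ℕ} (h : i + 2 ≤ j) (T : ℕ → Box m) :
    opN v q (i + 1) (opN v q (j + 1) (eN F T)) = opN v q (j + 1) (opN v q (i + 1) (eN F T)) := by
  simp only [opN_succ, map_add, map_smul]
  rw [sw_of_ne (i := j) (j := i) T (by omega) (by omega),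
    sw_of_ne (i := j) (j := i + 1) T (by omega) (by omega),
    sw_of_ne (i := i) (j := j) T (by omega) (by omega),
    sw_of_ne (i := i) (j := j + 1) T (by omega) (by omega), sw_comm h]
  module

theorem SU.first {T : ℕ → Box m} (hT : SU n T) (hn : 0 < n) : T 0 = ((T 0).1, 0, 0) := by
  obtain ⟨⟨c, a, b⟩, h1⟩ : ∃ x, x = T 0 := ⟨_, rfl⟩
  have h := hT.exists_lt hn h1.symm (a' := 0) (b' := 0) (by omega) (by omega)
  rw [← h1]
  simp only [Prod.mk.injEq, true_and]
  by_contra hc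
  obtain ⟨i, hi, _⟩ := h (by omega)
  omega

theorem SU.second {T : ℕ → Box m} (hT : SU n T) (hn : 1 < n) (hadj : ¬ Adj (T 0) (T 1)) :
    T 1 = ((T 1).1, 0, 0) ∧ (T 0).1 ≠ (T 1).1 := by
  have h := (SU_sw hT (i := 0) hn hadj).first (by omega)
  rw [sw_left] at h
  refine ⟨h, fun e => ?_⟩
  have h0 := hT.first (by omega)
  have := hT.1 0 1 (by omega) hn (by rw [h0, e]; exact h.symm)
  omega

theorem opN_braid0 (hq : q ≠ 0)
    (h1 : ∀ i : ℤ, i.natAbs < n → ∀ j j' : Fin m, j ≠ j' → q ^ i * v j - v j' ≠ 0)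
    (h2 : ∀ i : ℕ, 1 ≤ i → i < n → (∑ j ∈ Finset.range (i + 1), q ^ j) ≠ 0)
    {T : ℕ → Box m} (hT : SU n T) (hn : 1 < n) :
    opN v q 0 (opN v q 1 (opN v q 0 (opN v q 1 (eN F T)))) =
      opN v q 1 (opN v q 0 (opN v q 1 (opN v q 0 (eN F T)))) := by
  have o2 : ∀ T : ℕ → Box m, opN v q 1 (eN F T) = al v q (T 0) (T 1) • eN F T +
      be v q (T 0) (T 1) • eN F (sw 0 T) := fun T => opN_succ v q 0 T
  have s1 : sw 0 T 0 = T 1 := sw_left T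
  have s2 : sw 0 T 1 = T 0 := sw_right T
  by_cases hadj : Adj (T 0) (T 1)
  · simp only [o2, opN_zero, map_add, map_smul, be_adj v q hadj, zero_smul, add_zero, smul_smul]
    congr 1; ring
  · obtain ⟨hy, hne⟩ := hT.second hn hadj
    have hs : Sep n (T 0) (T 1) := hT.sep (by omega) (by omega) (by omega)
    have e1 := al_add hq h1 h2 hs
    have rx : res v q (T 0) = v (T 0).1 := by
      rw [res, hT.first (by omega)]; simp [ct]
    have ry : res v q (T 1) = v (T 1).1 := by
      rw [res, hy]; simp [ct]
    have e3 : al v q (T 0) (T 1) * (v (T 1).1 - v (T 0).1) = (q - 1) * v (T 1).1 := by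
      have := hs.res_ne hq h1 hne
      rw [← rx, ← ry, al, if_neg hne]
      field_simp
    simp only [o2, opN_zero, map_add, map_smul, s1, s2, sw_sw]
    generalize eN F T = a at *
    generalize eN F (sw 0 T) = b at *
    generalize al v q (T 0) (T 1) = A at *
    generalize al v q (T 1) (T 0) = A' at *
    generalize be v q (T 0) (T 1) = B at *
    generalize be v q (T 1) (T 0) = B' at *
    generalize v (T 0).1 = X at *
    generalize v (T 1).1 = Y at *
    match_scalars
    · ring
    · linear_combination B * (Y - X) * (Y * e1 - e3)

/-- The default box. -/
def dflt {m : ℕ} [NeZero m] : Box m := (0, 0, 0)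

/-- Standard tableaux of size `n` (of all shapes), as sequences of boxes. -/
def Tab (m n : ℕ) [NeZero m] : Type :=
  {T : ℕ → Box m // SU n T ∧ ∀ i, n ≤ i → T i = dflt}

variable [NeZero m]

/-- Swapped tableaux. -/
def swTab {n i : ℕ} (Z : Tab m n) (hi : i + 1 < n) (h : SU n (sw i Z.1)) : Tab m n :=
  ⟨sw i Z.1, h, fun j hj => by rw [sw_of_ne _ (by omega) (by omega)]; exact Z.2.2 j hj⟩

/-- The operators on the free module on standard tableaux. -/
def opM (v : Fin m → F) (q : F) (n : ℕ) : ℕ → (Tab m n →₀ F) →ₗ[F] (Tab m n →₀ F)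
  | 0 => Finsupp.linearCombination F (fun Z => v (Z.1 0).1 • Finsupp.single Z (1 : F))
  | i + 1 => Finsupp.linearCombination F (fun Z =>
      al v q (Z.1 i) (Z.1 (i + 1)) • Finsupp.single Z (1 : F) +
      if h : i + 1 < n ∧ SU n (sw i Z.1) then
        be v q (Z.1 i) (Z.1 (i + 1)) • Finsupp.single (swTab Z h.1 h.2) (1 : F) else 0)

/-- Embedding into the free module on all sequences. -/
def emb (F : Type) [Field F] (m n : ℕ) [NeZero m] :
    (Tab m n →₀ F) →ₗ[F] ((ℕ → Box m) →₀ F) :=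
  Finsupp.lmapDomain F F (fun Z : Tab m n => Z.1)

theorem emb_inj : Function.Injective (emb F m n) :=
  Finsupp.mapDomain_injective Subtype.val_injective

theorem emb_single (Z : Tab m n) : emb F m n (Finsupp.single Z 1) = eN F Z.1 := by
  simp [emb, eN]

theorem emb_opM {i : ℕ} (hi : i < n) (z : Tab m n →₀ F) :
    emb F m n (opM v q n i z) = opN v q i (emb F m n z) := by
  suffices h : emb F m n ∘ₗ opM v q n i = opN v q i ∘ₗ emb F m n from LinearMap.congr_fun h z
  apply Finsupp.lhom_ext'
  intro Z
  apply LinearMap.ext_ring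
  simp only [LinearMap.comp_apply, Finsupp.lsingle_apply, emb_single]
  cases i with
  | zero =>
    rw [opN_zero]
    simp only [opM, Finsupp.linearCombination_single, one_smul, map_smul, emb_single]
  | succ i =>
    rw [opN_succ]
    simp only [opM, Finsupp.linearCombination_single, one_smul, map_add, map_smul, emb_single]
    congr 1
    split_ifs with h
    · rw [map_smul, emb_single]; rfl
    · rw [map_zero, be_adj, zero_smul]
      by_contra hadj
      exact h ⟨hi, SU_sw Z.2.1 hi hadj⟩

theorem opM_ext {f g : (Tab m n →₀ F) →ₗ[F] (Tab m n →₀ F)}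
    (h : ∀ Z : Tab m n, emb F m n (f (Finsupp.single Z 1)) = emb F m n (g (Finsupp.single Z 1))) :
    f = g := by
  apply Finsupp.lhom_ext'
  intro Z
  apply LinearMap.ext_ring
  exact emb_inj (h Z)

theorem opM_zero_single (Z : Tab m n) :
    opM v q n 0 (Finsupp.single Z 1) = v (Z.1 0).1 • Finsupp.single Z 1 := by
  simp [opM]

end Repr

/-! ### The representation of the Hecke algebra -/

section Repr2

open MulOpposite

variable {F : Type} [Field F] {m n : ℕ} [NeZero m]

theorem cyclo_prod {M : Type} [AddCommGroup M] [Module F M] (f : Module.End F M) (e : M) (t : F)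
    (h : f e = t • e) (l : List F) :
    (unop ((l.map fun c => (op f - algebraMap F (Module.End F M)ᵐᵒᵖ c)).prod)) e =
      (l.map fun c => t - c).prod • e := by
  induction l with
  | nil => simp
  | cons c l ih =>
    simp only [List.map_cons, List.prod_cons, unop_mul, Module.End.mul_apply, unop_sub, unop_op,
      LinearMap.sub_apply, MulOpposite.algebraMap_apply, Module.algebraMap_end_apply, h, map_sub,
      map_smul]
    simp only [MulOpposite.algebraMap_apply] at ih
    rw [ih, smul_smul, smul_smul, ← sub_smul]
    congr 1
    ring

/-- The representation of the free algebra. -/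
def psi (v : Fin m → F) (q : F) :
    FreeAlgebra F (Fin n) →ₐ[F] (Module.End F (Tab m n →₀ F))ᵐᵒᵖ :=
  FreeAlgebra.lift F (fun i => op (opM v q n i.1))

theorem psi_ι (v : Fin m → F) (q : F) (i : Fin n) :
    psi v q (FreeAlgebra.ι F i) = op (opM v q n i.1) := by
  simp [psi]

theorem psi_rel {v : Fin m → F} {q : F} (hq : q ≠ 0)
    (h1 : ∀ i : ℤ, i.natAbs < n → ∀ j j' : Fin m, j ≠ j' → q ^ i * v j - v j' ≠ 0)
    (h2 : ∀ i : ℕ, 1 ≤ i → i < n → (∑ j ∈ Finset.range (i + 1), q ^ j) ≠ 0)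
    (x y : FreeAlgebra F (Fin n)) (h : Rel F m n v q x y) : psi v q x = psi v q y := by
  cases h with
  | cyclo i hi =>
    rw [map_list_prod, map_zero]
    apply unop_injective
    have e : (List.map (psi v q) (List.ofFn fun j : Fin m =>
        (FreeAlgebra.ι F i - algebraMap F (FreeAlgebra F (Fin n)) (v j)))) =
        (List.ofFn v).map
          (fun c => (op (opM v q n i.1) - algebraMap F (Module.End F (Tab m n →₀ F))ᵐᵒᵖ c)) := by
      rw [List.map_ofFn, List.map_ofFn]
      congr 1
      funext j
      simp [psi_ι]
    rw [e]
    apply opM_ext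
    intro Z
    rw [hi, cyclo_prod _ _ _ (opM_zero_single Z)]
    rw [List.prod_eq_zero]
    · simp
    · simp only [List.mem_map, List.mem_ofFn]
      exact ⟨v (Z.1 0).1, ⟨_, rfl⟩, sub_self _⟩
  | quad i hi =>
    obtain ⟨i, hin⟩ := i
    obtain ⟨i, rfl⟩ : ∃ j, i = j + 1 := ⟨i - 1, by simp at hi; omega⟩
    apply unop_injective
    apply opM_ext
    intro Z
    simp only [map_mul, map_sub, map_add, map_one, AlgHom.commutes, psi_ι, unop_mul, unop_sub,
      unop_add, unop_op, unop_one, map_zero, unop_zero, Module.End.mul_apply, LinearMap.add_apply,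
      LinearMap.sub_apply, LinearMap.zero_apply, MulOpposite.algebraMap_apply,
      Module.algebraMap_end_apply, Module.End.one_apply, map_smul]
    simp only [emb_opM hin, emb_single, map_sub, map_smul, opN_quad hq h1 h2 Z.2.1 hin]
    module
  | braid0 i j hi hj =>
    obtain ⟨i, hin⟩ := i
    obtain ⟨j, hjn⟩ := j
    simp only at hi hj
    subst hi hj
    apply unop_injective
    apply opM_ext
    intro Z
    simp only [map_mul, psi_ι, unop_mul, unop_op, Module.End.mul_apply]
    simp only [emb_opM hin, emb_opM hjn, emb_single, opN_braid0 hq h1 h2 Z.2.1 hjn]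
  | comm i j hij =>
    obtain ⟨i, hin⟩ := i
    obtain ⟨j, hjn⟩ := j
    simp only at hij
    apply unop_injective
    apply opM_ext
    intro Z
    simp only [map_mul, psi_ι, unop_mul, unop_op, Module.End.mul_apply]
    simp only [emb_opM hin, emb_opM hjn, emb_single]
    obtain ⟨j, rfl⟩ : ∃ l, j = l + 2 := ⟨j - 2, by omega⟩
    cases i with
    | zero => exact (opN_comm0 _).symm
    | succ i => exact (opN_comm (j := j + 1) (by omega) _).symm
  | braid i j hi hj =>
    obtain ⟨i, hin⟩ := i
    obtain ⟨j, hjn⟩ := j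
    simp only at hi hj
    subst hj
    obtain ⟨i, rfl⟩ : ∃ j, i = j + 1 := ⟨i - 1, by omega⟩
    apply unop_injective
    apply opM_ext
    intro Z
    simp only [map_mul, psi_ι, unop_mul, unop_op, Module.End.mul_apply]
    simp only [emb_opM hin, emb_opM hjn, emb_single]
    exact (opN_braid hq h1 h2 Z.2.1 hjn).symm

/-- The representation of the opposite Hecke algebra. -/
def rho {v : Fin m → F} {q : F} (hq : q ≠ 0)
    (h1 : ∀ i : ℤ, i.natAbs < n → ∀ j j' : Fin m, j ≠ j' → q ^ i * v j - v j' ≠ 0)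
    (h2 : ∀ i : ℕ, 1 ≤ i → i < n → (∑ j ∈ Finset.range (i + 1), q ^ j) ≠ 0) :
    (CH F m n v q)ᵐᵒᵖ →ₐ[F] Module.End F (Tab m n →₀ F) :=
  (AlgHom.opComm
    (RingQuot.liftAlgHom F ⟨psi v q, fun x y h => psi_rel hq h1 h2 x y h⟩ :
      CH F m n v q →ₐ[F] (Module.End F (Tab m n →₀ F))ᵐᵒᵖ))

/-- The generators in the Hecke algebra. -/
def gg (v : Fin m → F) (q : F) (i : Fin n) : CH F m n v q :=
  RingQuot.mkAlgHom F (Rel F m n v q) (FreeAlgebra.ι F i)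

theorem rho_gg {v : Fin m → F} {q : F} (hq : q ≠ 0)
    (h1 : ∀ i : ℤ, i.natAbs < n → ∀ j j' : Fin m, j ≠ j' → q ^ i * v j - v j' ≠ 0)
    (h2 : ∀ i : ℕ, 1 ≤ i → i < n → (∑ j ∈ Finset.range (i + 1), q ^ j) ≠ 0) (i : Fin n) :
    rho hq h1 h2 (op (gg v q i)) = opM v q n i.1 := by
  have : (RingQuot.liftAlgHom F ⟨psi v q, fun x y h => psi_rel hq h1 h2 x y h⟩ :
      RingQuot (Rel F m n v q) →ₐ[F] (Module.End F (Tab m n →₀ F))ᵐᵒᵖ)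
      (RingQuot.mkAlgHom F (Rel F m n v q) (FreeAlgebra.ι F i)) = psi v q (FreeAlgebra.ι F i) :=
    RingQuot.liftAlgHom_mkAlgHom_apply _ _ _ _
  rw [psi_ι] at this
  exact congrArg unop this

theorem gg_adjoin (v : Fin m → F) (q : F) :
    Algebra.adjoin F (Set.range (gg (n := n) v q)) = ⊤ := by
  have h : Set.range (gg (n := n) v q) = (RingQuot.mkAlgHom F (Rel F m n v q) :
      FreeAlgebra F (Fin n) → RingQuot (Rel F m n v q)) '' Set.range (FreeAlgebra.ι F) := by
    rw [← Set.range_comp]; rfl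
  have h2 : Algebra.adjoin F ((RingQuot.mkAlgHom F (Rel F m n v q) :
      FreeAlgebra F (Fin n) → RingQuot (Rel F m n v q)) '' Set.range (FreeAlgebra.ι F)) = ⊤ := by
    rw [Algebra.adjoin_image, FreeAlgebra.adjoin_range_ι, Algebra.map_top,
      AlgHom.range_eq_top]
    exact RingQuot.mkAlgHom_surjective _ _
  rw [← h] at h2
  exact h2

theorem pre_of_opM {v : Fin m → F} {q : F} {i : ℕ} (hi : i < n) {x y : Tab m n}
    (hxy : pre n x.1 ≠ pre n y.1) : opM v q n i (Finsupp.single x 1) y = 0 := by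
  have hne : x ≠ y := fun e => hxy (by rw [e])
  cases i with
  | zero => simp [opM, hne]
  | succ i =>
    simp only [opM, Finsupp.linearCombination_single, one_smul, Finsupp.add_apply,
      Finsupp.smul_apply, Finsupp.single_eq_of_ne' hne, smul_zero, zero_add]
    split_ifs with h
    · have : swTab x h.1 h.2 ≠ y := by
        intro e
        apply hxy
        rw [← e]
        exact (pre_sw_ge x.1 (by omega)).symm
      simp [this]
    · simp

theorem pre_of_rho {v : Fin m → F} {q : F} (hq : q ≠ 0)
    (h1 : ∀ i : ℤ, i.natAbs < n → ∀ j j' : Fin m, j ≠ j' → q ^ i * v j - v j' ≠ 0)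
    (h2 : ∀ i : ℕ, 1 ≤ i → i < n → (∑ j ∈ Finset.range (i + 1), q ^ j) ≠ 0)
    (a : (CH F m n v q)ᵐᵒᵖ) {x y : Tab m n}
    (hxy : pre n x.1 ≠ pre n y.1) : rho hq h1 h2 a (Finsupp.single x 1) y = 0 := by
  -- subalgebra of shape-preserving operators
  have key : ∀ b : CH F m n v q, ∀ D : Finset (Box m), ∀ z : Tab m n →₀ F,
      (∀ y, pre n y.1 ≠ D → z y = 0) → (∀ y, pre n y.1 ≠ D → rho hq h1 h2 (op b) z y = 0) := by
    intro b
    have hb : b ∈ Algebra.adjoin F (Set.range (gg (n := n) v q)) := by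
      rw [gg_adjoin]; trivial
    induction hb using Algebra.adjoin_induction with
    | mem b hb =>
      obtain ⟨i, rfl⟩ := hb
      intro D z hz y hy
      rw [rho_gg, ← Finsupp.sum_single z, Finsupp.sum, map_sum, Finsupp.finsetSum_apply]
      apply Finset.sum_eq_zero
      intro x hx
      have : pre n x.1 = D := by
        by_contra hc
        exact (Finsupp.mem_support_iff.1 hx) (hz x hc)
      have h3 : Finsupp.single x (z x) = z x • Finsupp.single x 1 := by simp
      rw [h3, map_smul, Finsupp.smul_apply, pre_of_opM i.2 (by rw [this]; exact Ne.symm hy),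
        smul_zero]
    | algebraMap c =>
      intro D z hz y hy
      have : (op ((algebraMap F (CH F m n v q)) c)) = algebraMap F (CH F m n v q)ᵐᵒᵖ c := rfl
      rw [this, AlgHom.commutes]
      simp [hz y hy]
    | add b c _ _ hb hc =>
      intro D z hz y hy
      rw [op_add, map_add]
      simp [hb D z hz y hy, hc D z hz y hy]
    | mul b c _ _ hb hc =>
      intro D z hz y hy
      rw [op_mul, map_mul, Module.End.mul_apply]
      exact hc D _ (hb D z hz) y hy
  refine key (unop a) (pre n x.1) _ (fun y hy => ?_) y (Ne.symm hxy)
  exact Finsupp.single_eq_of_ne (fun e => hy (by rw [e]))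

end Repr2

/-! ### Matrix units -/

section MatUnits

variable {F : Type} [Field F] {m n : ℕ} [NeZero m]

theorem SU.bound {r j : ℕ} {T : ℕ → Box m} (h : SU r T) (hj : j < r) :
    (T j).2.1 < r ∧ (T j).2.2 < r := by
  obtain ⟨⟨c, a, b⟩, h1⟩ : ∃ x, x = T j := ⟨_, rfl⟩
  have hm : (c, a, b) ∈ pre r T := mem_pre.2 ⟨j, hj, h1.symm⟩
  have hl := h.2 r le_rfl
  have h0 := hl.le hm (Nat.zero_le _) (Nat.zero_le _)
  have ha := hl.le hm le_rfl (Nat.zero_le _)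
  have hb := hl.le hm (Nat.zero_le _) le_rfl
  have e1 := ct_same hl h0 ha rfl
  have e2 := ct_same hl h0 hb rfl
  rw [h.card] at e1 e2
  rw [← h1]
  simp only [ct] at e1 e2
  constructor
  · show a < r
    omega
  · show b < r
    omega

instance Tab.finite : Finite (Tab m n) := by
  let g : Tab m n → (Fin n → Fin m × Fin n × Fin n) := fun Z i =>
    ((Z.1 i).1, ⟨(Z.1 i).2.1, (Z.2.1.bound i.2).1⟩, ⟨(Z.1 i).2.2, (Z.2.1.bound i.2).2⟩)
  apply Finite.of_injective g
  intro Z Y h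
  apply Subtype.ext
  funext i
  by_cases hi : i < n
  · have := congrFun h ⟨i, hi⟩
    simp only [g, Prod.mk.injEq, Fin.mk.injEq] at this
    exact Prod.ext this.1 (Prod.ext this.2.1 this.2.2)
  · rw [Z.2.2 i (by omega), Y.2.2 i (by omega)]

instance Tab.fintype : Fintype (Tab m n) := Fintype.ofFinite _

/-- Agreement up to `r`. -/
def Agr (r : ℕ) (Z S : ℕ → Box m) : Prop := ∀ i, i < r → Z i = S i

/-- Splicing of tableaux. -/
def spl (r : ℕ) (S : ℕ → Box m) (Z : Tab m n) : Tab m n :=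
  if h : r ≤ n ∧ SU n (splice r S Z.1) then
    ⟨splice r S Z.1, h.2, fun i hi => by rw [splice_ge (by omega)]; exact Z.2.2 i hi⟩ else Z

theorem spl_val {r : ℕ} {S : ℕ → Box m} {Z : Tab m n} (hr : r ≤ n) (hS : SU r S)
    (h : pre r S = pre r Z.1) : (spl r S Z).1 = splice r S Z.1 := by
  have : r ≤ n ∧ SU n (splice r S Z.1) := ⟨hr, SU_splice hS Z.2.1 h hr⟩
  have e : spl r S Z = ⟨splice r S Z.1, this.2, fun i hi => by
      rw [splice_ge (by omega)]; exact Z.2.2 i hi⟩ := dif_pos this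
  rw [e]

/-- The specification of matrix units. -/
def Spec (f : Module.End F (Tab m n →₀ F)) (r : ℕ) (S S' : ℕ → Box m) : Prop :=
  ∀ Z : Tab m n, f (Finsupp.single Z 1) =
    if Agr r Z.1 S' then Finsupp.single (spl r S Z) 1 else 0

theorem Agr.pre {r : ℕ} {Z S : ℕ → Box m} (h : Agr r Z S) : pre r Z = Cyclo.pre r S := pre_congr h

theorem Spec.mul {f g : Module.End F (Tab m n →₀ F)} {r : ℕ} {S S' S'' : ℕ → Box m} (hr : r ≤ n)
    (hf : Spec f r S S') (hg : Spec g r S' S'') (hS : SU r S) (hS' : SU r S')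
    (h1 : pre r S = pre r S') (h2 : pre r S' = pre r S'') : Spec (f * g) r S S'' := by
  intro Z
  rw [Module.End.mul_apply, hg Z]
  split_ifs with h
  · have e := spl_val (Z := Z) hr hS' (h2.trans h.pre.symm)
    have ag : Agr r (spl r S' Z).1 S' := fun i hi => by rw [e, splice_lt hi]
    rw [hf, if_pos ag]
    congr 1
    apply Subtype.ext
    rw [spl_val hr hS (h1.trans ag.pre.symm), spl_val hr hS ((h1.trans h2).trans h.pre.symm), e]
    funext i
    by_cases hi : i < r
    · rw [splice_lt hi, splice_lt hi]
    · rw [splice_ge (by omega), splice_ge (by omega), splice_ge (by omega)]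
  · exact map_zero f

theorem opM_succ_adj {v : Fin m → F} {q : F} {i : ℕ} {Z : Tab m n} (hi : i + 1 < n)
    (h : Adj (Z.1 i) (Z.1 (i + 1))) : opM v q n (i + 1) (Finsupp.single Z 1) =
      al v q (Z.1 i) (Z.1 (i + 1)) • Finsupp.single Z 1 := by
  have h' : ¬ (i + 1 < n ∧ SU n (sw i Z.1)) := fun h' => SU_sw_not Z.2.1 hi h h'.2
  simp only [opM, Finsupp.linearCombination_single, one_smul]
  rw [dif_neg h', add_zero]

theorem Sep.mono {r : ℕ} {x y : Box m} (h : Sep r x y) (hr : r ≤ n) : Sep n x y := by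
  refine ⟨fun e => ⟨(h.1 e).1, ?_⟩, fun e => ?_⟩
  · have := (h.1 e).2; omega
  · have := h.2 e; omega

/-- First step. -/
theorem mu_one {v : Fin m → F} {q : F} (hn : 0 < n)
    (h1 : ∀ i : ℤ, i.natAbs < n → ∀ j j' : Fin m, j ≠ j' → q ^ i * v j - v j' ≠ 0)
    (R : Subalgebra F (Module.End F (Tab m n →₀ F))) (hR : ∀ i, i < n → opM v q n i ∈ R)
    (S S' : ℕ → Box m) (hS : SU 1 S) (hS' : SU 1 S') (h : pre 1 S = pre 1 S') :
    ∃ f ∈ R, Spec f 1 S S' := by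
  have e0 : S 0 = S' 0 := by simpa [pre] using h
  have hv : Function.Injective v := by
    intro j j' hj
    by_contra hc
    apply h1 0 (by simpa using hn) j j' hc
    simp [hj]
  refine ⟨Polynomial.aeval (opM v q n 0) (Lagrange.basis Finset.univ v (S 0).1), ?_, ?_⟩
  · have := Polynomial.aeval_mem_adjoin_singleton F (opM v q n 0)
      (p := Lagrange.basis Finset.univ v (S 0).1)
    exact Algebra.adjoin_le (by simpa using hR 0 hn) this
  · intro Z
    have he : Module.End.HasEigenvector (opM v q n 0) (v (Z.1 0).1) (Finsupp.single Z (1 : F)) := by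
      refine ⟨Module.End.mem_eigenspace_iff.2 (opM_zero_single Z), by simp⟩
    rw [Module.End.aeval_apply_of_hasEigenvector he]
    have hz := Z.2.1.first hn
    have hs := hS'.first (by omega)
    split_ifs with ha
    · have := ha 0 (by omega)
      rw [this, ← e0, Lagrange.eval_basis_self hv.injOn (Finset.mem_univ _), one_smul]
      congr 1
      apply Subtype.ext
      rw [spl_val (by omega) hS (by rw [h]; exact ha.pre.symm)]
      funext i
      by_cases hi : i < 1
      · rw [splice_lt hi]
        have : i = 0 := by omega
        subst this
        rw [this, e0]
      · rw [splice_ge (by omega)]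
    · have : (S 0).1 ≠ (Z.1 0).1 := by
        intro hc
        apply ha
        intro i hi
        have : i = 0 := by omega
        subst this
        rw [hz, hs, ← hc, e0]
      rw [Lagrange.eval_basis_of_ne this (Finset.mem_univ _), zero_smul]

/-- Case (i) of the induction. -/
theorem mu_ne {v : Fin m → F} {q : F} (hq : q ≠ 0)
    (h1 : ∀ i : ℤ, i.natAbs < n → ∀ j j' : Fin m, j ≠ j' → q ^ i * v j - v j' ≠ 0)
    (h2 : ∀ i : ℕ, 1 ≤ i → i < n → (∑ j ∈ Finset.range (i + 1), q ^ j) ≠ 0)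
    (R : Subalgebra F (Module.End F (Tab m n →₀ F))) (hR : ∀ i, i < n → opM v q n i ∈ R)
    {s : ℕ} (hs : s + 1 < n)
    (ih : ∀ S S' : ℕ → Box m, SU (s + 1) S → SU (s + 1) S' → pre (s + 1) S = pre (s + 1) S' →
      ∃ f ∈ R, Spec f (s + 1) S S')
    (T T' : ℕ → Box m) (hT : SU (s + 2) T) (hT' : SU (s + 2) T')
    (h : pre (s + 2) T = pre (s + 2) T') (hne : T (s + 1) ≠ T' (s + 1)) :
    ∃ f ∈ R, Spec f (s + 2) T T' := by
  obtain ⟨x, hx⟩ : ∃ x, x = T (s + 1) := ⟨_, rfl⟩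
  obtain ⟨x', hx'⟩ : ∃ x, x = T' (s + 1) := ⟨_, rfl⟩
  rw [← hx, ← hx'] at hne
  obtain ⟨hT1, hT2, hT3⟩ := SU_succ.1 hT
  obtain ⟨hT1', hT2', hT3'⟩ := SU_succ.1 hT'
  rw [← hx] at hT2
  rw [← hx'] at hT2'
  have hpT : pre (s + 2) T = insert x (pre (s + 1) T) := by rw [hx]; exact pre_succ T
  have hpT' : pre (s + 2) T' = insert x' (pre (s + 1) T') := by rw [hx']; exact pre_succ T'
  have hins : insert x (pre (s + 1) T) = insert x' (pre (s + 1) T') := by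
    rw [← hpT, ← hpT', h]
  have hxm : x ∈ pre (s + 1) T' := by
    have : x ∈ insert x' (pre (s + 1) T') := by rw [← hins]; exact Finset.mem_insert_self _ _
    exact (Finset.mem_insert.1 this).resolve_left hne
  have hxm' : x' ∈ pre (s + 1) T := by
    have : x' ∈ insert x (pre (s + 1) T) := by rw [hins]; exact Finset.mem_insert_self _ _
    exact (Finset.mem_insert.1 this).resolve_left (Ne.symm hne)
  have hA : insert x' (pre (s + 1) T ∩ pre (s + 1) T') = pre (s + 1) T := by
    ext y
    have := Finset.ext_iff.1 hins y
    simp only [Finset.mem_insert, Finset.mem_inter] at this ⊢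
    constructor
    · rintro (rfl | ⟨hy, _⟩)
      · exact hxm'
      · exact hy
    · intro hy
      by_cases e : y = x'
      · exact Or.inl e
      · exact Or.inr ⟨hy, (this.1 (Or.inr hy)).resolve_left e⟩
  have hA' : insert x (pre (s + 1) T ∩ pre (s + 1) T') = pre (s + 1) T' := by
    ext y
    have := Finset.ext_iff.1 hins y
    simp only [Finset.mem_insert, Finset.mem_inter] at this ⊢
    constructor
    · rintro (rfl | ⟨_, hy⟩)
      · exact hxm
      · exact hy
    · intro hy
      by_cases e : y = x
      · exact Or.inl e
      · exact Or.inr ⟨(this.2 (Or.inr hy)).resolve_left e, hy⟩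
  have hlow : IsLow (pre (s + 1) T ∩ pre (s + 1) T') :=
    (hT1.2 _ le_rfl).inter (hT1'.2 _ le_rfl)
  have hnx : x ∉ pre (s + 1) T ∩ pre (s + 1) T' := fun hc => hT2 (Finset.mem_inter.1 hc).1
  have hnx' : x' ∉ pre (s + 1) T ∩ pre (s + 1) T' := fun hc => hT2' (Finset.mem_inter.1 hc).2
  have hcard : (pre (s + 1) T ∩ pre (s + 1) T').card = s := by
    have e1 := Finset.card_insert_of_notMem hnx
    rw [hA', hT1'.card] at e1
    omega
  obtain ⟨U, hU1, hU2, -⟩ := exists_SU x s _ hlow hcard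
  have mkW : ∀ x x' : Box m, ∀ P : Finset (Box m),
      x' ∉ pre (s + 1) T ∩ pre (s + 1) T' → IsLow P →
      insert x' (pre (s + 1) T ∩ pre (s + 1) T') = P → x ∉ P →
      insert x P = pre (s + 2) T →
      ∃ W : ℕ → Box m, SU (s + 2) W ∧ W s = x' ∧ W (s + 1) = x ∧ pre (s + 1) W = P ∧
        ∀ i, i < s → W i = U i := by
    intro x x' P hx' hP hP' hxP hfin
    refine ⟨fun i => if i < s then U i else if i = s then x' else x, ?_, ?_, ?_, ?_, ?_⟩
    · have e0 : pre s (fun i => if i < s then U i else if i = s then x' else x) =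
          pre (s + 1) T ∩ pre (s + 1) T' := by
        rw [← hU2]; exact pre_congr fun i hi => by simp [hi]
      have e1 : pre (s + 1) (fun i => if i < s then U i else if i = s then x' else x) = P := by
        rw [pre_succ, e0]; simp [hP']
      have e2 : pre (s + 2) (fun i => if i < s then U i else if i = s then x' else x) =
          pre (s + 2) T := by
        rw [pre_succ, e1]; simp [hfin]
      refine SU_succ.2 ⟨SU_succ.2 ⟨hU1.congr fun i hi => by simp [hi], ?_, ?_⟩, ?_, ?_⟩
      · rw [e0]; simpa using hx'
      · rw [e1]; exact hP
      · rw [e1]; simpa using hxP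
      · rw [e2]; exact hT3
    · simp
    · simp
    · rw [pre_succ, pre_congr (T := U) (fun i hi => by simp [hi]), hU2]; simpa using hP'
    · intro i hi; simp [hi]
  obtain ⟨W, hW, hWs, hWs1, hWp, hWU⟩ := mkW x x' (pre (s + 1) T) hnx' (hT1.2 _ le_rfl) hA hT2
    hpT.symm
  obtain ⟨W', hW', hWs', hWs1', hWp', hWU'⟩ := mkW x' x (pre (s + 1) T') hnx (hT1'.2 _ le_rfl)
    hA' hT2' (by rw [h, hpT'])
  have hsw : ∀ i, i < s + 2 → sw s W' i = W i := by
    intro i hi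
    rcases Nat.lt_trichotomy i s with h3 | h3 | h3
    · rw [sw_of_ne _ (by omega) (by omega), hWU i h3, hWU' i h3]
    · subst h3; rw [sw_left, hWs, hWs1']
    · have : i = s + 1 := by omega
      subst this; rw [sw_right, hWs1, hWs']
  have hnadj : ¬ Adj x x' := by
    intro hadj
    refine SU_sw_not (i := s) hW' (by omega) (by rw [hWs', hWs1']; exact hadj) ?_
    exact hW.congr fun i hi => (hsw i hi).symm
  have hbe : be v q x x' ≠ 0 := by
    have hsep : Sep (s + 2) (W' s) (W' (s + 1)) := hW'.sep (by omega) (by omega) (by omega)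
    rw [hWs', hWs1'] at hsep
    refine be_ne hq h1 h2 (hsep.mono (by omega)) hnadj ?_
    intro e hc
    have := hW'.adj_of_ct (i := s) (by omega) (by rw [hWs', hWs1']; exact e)
      (by rw [hWs', hWs1']; exact Or.inr hc)
    rw [hWs', hWs1'] at this
    exact hnadj this
  obtain ⟨f, hf, hf'⟩ := ih T W hT1 (hW.mono (by omega)) hWp.symm
  obtain ⟨g, hg, hg'⟩ := ih W' T' (hW'.mono (by omega)) hT1' hWp'
  refine ⟨(be v q x x')⁻¹ • (f * opM v q n (s + 1) * g),
    R.smul_mem (R.mul_mem (R.mul_mem hf (hR _ hs)) hg) _, ?_⟩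
  intro Z
  rw [LinearMap.smul_apply, Module.End.mul_apply, Module.End.mul_apply, hg' Z]
  by_cases hag : Agr (s + 1) Z.1 T'
  · rw [if_pos hag]
    have hY := spl_val (S := W') (Z := Z) hs.le (hW'.mono (by omega)) (by rw [hWp', hag.pre])
    generalize spl (s + 1) W' Z = Y at hY ⊢
    have hYs : Y.1 s = x := by rw [hY, splice_lt (by omega), hWs']
    have hYs1 : Y.1 (s + 1) = Z.1 (s + 1) := by rw [hY, splice_ge (by omega)]
    simp only [opM, Finsupp.linearCombination_single, one_smul, map_add, map_smul]
    have hz : f (Finsupp.single Y 1) = 0 := by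
      rw [hf' Y, if_neg]
      intro hc
      have := hc s (by omega)
      rw [hYs, hWs] at this
      exact hne this
    rw [hz, smul_zero, zero_add, hYs, hYs1]
    by_cases hzx : Z.1 (s + 1) = x'
    · have hag2 : Agr (s + 2) Z.1 T' := by
        intro i hi
        by_cases e : i < s + 1
        · exact hag i e
        · have : i = s + 1 := by omega
          subst this; rw [hzx, hx']
      have hsu : SU n (sw s Y.1) := SU_sw Y.2.1 hs (by rw [hYs, hYs1, hzx]; exact hnadj)
      rw [dif_pos ⟨hs, hsu⟩, if_pos hag2, map_smul, hzx, smul_smul, inv_mul_cancel₀ hbe, one_smul,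
        hf']
      have hag3 : Agr (s + 1) (swTab Y hs hsu).1 W := by
        intro i hi
        show sw s Y.1 i = W i
        rw [← hsw i (by omega)]
        rcases Nat.lt_or_ge i s with h3 | h3
        · rw [sw_of_ne _ (by omega) (by omega), sw_of_ne _ (by omega) (by omega), hY,
            splice_lt (by omega)]
        · have : i = s := by omega
          subst this
          rw [sw_left, sw_left, hYs1, hzx, hWs1']
      rw [if_pos hag3]
      congr 1
      apply Subtype.ext
      rw [spl_val hs.le hT1 (by rw [hag3.pre, hWp]), spl_val (by omega) hT (by rw [h, hag2.pre])]
      funext i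
      rcases Nat.lt_trichotomy i (s + 1) with h3 | h3 | h3
      · rw [splice_lt h3, splice_lt (by omega)]
      · subst h3
        rw [splice_ge le_rfl, splice_lt (by omega), ← hx]
        show sw s Y.1 (s + 1) = x
        rw [sw_right, hYs]
      · rw [splice_ge (by omega), splice_ge (by omega)]
        show sw s Y.1 i = Z.1 i
        rw [sw_of_ne _ (by omega) (by omega), hY, splice_ge (by omega)]
    · have hag2 : ¬ Agr (s + 2) Z.1 T' := fun hc => hzx (by rw [hc (s + 1) (by omega), hx'])
      rw [if_neg hag2]
      split_ifs with hc
      · rw [map_smul, hf', if_neg, smul_zero, smul_zero]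
        intro hc2
        have : sw s Y.1 s = W s := hc2 s (by omega)
        rw [sw_left, hYs1, hWs] at this
        exact hzx this
      · rw [map_zero, smul_zero]
  · have hag2 : ¬ Agr (s + 2) Z.1 T' := fun hc => hag fun i hi => hc i (by omega)
    rw [if_neg hag, if_neg hag2, map_zero, map_zero, smul_zero]

end MatUnits

/-! ### Matrix units, second part -/

section MatUnits2

variable {F : Type} [Field F] {m n : ℕ} [NeZero m]

/-- There is another removable box. -/
def Good (r : ℕ) (D : Finset (Box m)) (x : Box m) : Prop :=
  ∃ T : ℕ → Box m, SU (r + 1) T ∧ pre (r + 1) T = D ∧ T r ≠ x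

theorem adj_of_bad {s : ℕ} {T : ℕ → Box m} (hT : SU (s + 2) T)
    (hbad : ¬ Good (s + 1) (pre (s + 2) T) (T (s + 1))) : Adj (T s) (T (s + 1)) := by
  by_contra hc
  have h := SU_sw hT (i := s) (by omega) hc
  refine hbad ⟨sw s T, h, pre_sw_ge T (by omega), ?_⟩
  rw [sw_right]
  intro e
  have := hT.1 s (s + 1) (by omega) (by omega) e
  omega

theorem SU.upd {r : ℕ} {T Z : ℕ → Box m} (hT : SU r T) (hZ : SU (r + 1) Z)
    (h : pre r T = pre r Z) : SU (r + 1) (Function.update T r (Z r)) ∧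
      pre (r + 1) (Function.update T r (Z r)) = pre (r + 1) Z := by
  have e0 : pre r (Function.update T r (Z r)) = pre r Z := by
    rw [← h]
    exact pre_congr fun i hi => Function.update_of_ne (by omega) _ _
  have e1 : pre (r + 1) (Function.update T r (Z r)) = pre (r + 1) Z := by
    rw [pre_succ, pre_succ, e0, Function.update_self]
  refine ⟨SU_succ.2 ⟨hT.congr fun i hi => (Function.update_of_ne (by omega) _ _).symm, ?_, ?_⟩, e1⟩
  · rw [e0, Function.update_self]; exact (SU_succ.1 hZ).2.1
  · rw [e1]; exact (SU_succ.1 hZ).2.2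

/-- The induction step. -/
theorem mu_step {v : Fin m → F} {q : F} (hq : q ≠ 0)
    (h1 : ∀ i : ℤ, i.natAbs < n → ∀ j j' : Fin m, j ≠ j' → q ^ i * v j - v j' ≠ 0)
    (h2 : ∀ i : ℕ, 1 ≤ i → i < n → (∑ j ∈ Finset.range (i + 1), q ^ j) ≠ 0)
    (R : Subalgebra F (Module.End F (Tab m n →₀ F))) (hR : ∀ i, i < n → opM v q n i ∈ R)
    {s : ℕ} (hs : s + 1 < n)
    (ih : ∀ S S' : ℕ → Box m, SU (s + 1) S → SU (s + 1) S' → pre (s + 1) S = pre (s + 1) S' →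
      ∃ f ∈ R, Spec f (s + 1) S S')
    (T T' : ℕ → Box m) (hT : SU (s + 2) T) (hT' : SU (s + 2) T')
    (h : pre (s + 2) T = pre (s + 2) T') :
    ∃ f ∈ R, Spec f (s + 2) T T' := by
  have mne := mu_ne hq h1 h2 R hR hs ih
  have mgood : ∀ T T' : ℕ → Box m, SU (s + 2) T → SU (s + 2) T' →
      pre (s + 2) T = pre (s + 2) T' → Good (s + 1) (pre (s + 2) T) (T (s + 1)) →
      ∃ f ∈ R, Spec f (s + 2) T T' := by
    intro T T' hT hT' h hg
    by_cases hne : T (s + 1) = T' (s + 1)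
    · obtain ⟨T2, hT2, hp, hn2⟩ := hg
      obtain ⟨f, hf, hf'⟩ := mne T T2 hT hT2 hp.symm (Ne.symm hn2)
      obtain ⟨g, hg, hg'⟩ := mne T2 T' hT2 hT' (hp.trans h) (by rw [← hne]; exact hn2)
      exact ⟨f * g, R.mul_mem hf hg, hf'.mul (by omega) hg' hT hT2 hp.symm (hp.trans h)⟩
    · exact mne T T' hT hT' h hne
  by_cases hgood : Good (s + 1) (pre (s + 2) T) (T (s + 1))
  · exact mgood T T' hT hT' h hgood
  by_cases hne : T (s + 1) = T' (s + 1)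
  swap
  · exact mne T T' hT hT' h hne
  have hT1 := (SU_succ.1 hT).1
  have hT1' := (SU_succ.1 hT').1
  have hp : pre (s + 1) T = pre (s + 1) T' := by
    have e1 : pre (s + 2) T = insert (T (s + 1)) (pre (s + 1) T) := pre_succ T
    have e2 : pre (s + 2) T' = insert (T' (s + 1)) (pre (s + 1) T') := pre_succ T'
    have n1 := (SU_succ.1 hT).2.1
    have n2 := (SU_succ.1 hT').2.1
    rw [← Finset.erase_insert n1, ← Finset.erase_insert n2, ← e1, ← e2, h, hne]
  obtain ⟨E, hE, hE'⟩ := ih T T' hT1 hT1' hp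
  -- the good boxes
  let Y : Finset (Box m) := (Finset.univ.image (fun Z : Tab m n => Z.1 (s + 1))).filter
    (fun y => SU (s + 2) (Function.update T (s + 1) y) ∧
      SU (s + 2) (Function.update T' (s + 1) y) ∧
      Good (s + 1) (pre (s + 2) (Function.update T (s + 1) y)) y)
  have hY : ∀ y ∈ Y, ∃ f ∈ R,
      Spec f (s + 2) (Function.update T (s + 1) y) (Function.update T' (s + 1) y) := by
    intro y hy
    obtain ⟨_, hy1, hy2, hy3⟩ := Finset.mem_filter.1 hy
    refine mgood _ _ hy1 hy2 ?_ (by rw [Function.update_self]; exact hy3)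
    have u1 : pre (s + 1) (Function.update T (s + 1) y) = pre (s + 1) T :=
      pre_congr fun i hi => Function.update_of_ne (by omega) _ _
    have u2 : pre (s + 1) (Function.update T' (s + 1) y) = pre (s + 1) T' :=
      pre_congr fun i hi => Function.update_of_ne (by omega) _ _
    rw [pre_succ (r := s + 1), pre_succ (r := s + 1), u1, u2, hp, Function.update_self,
      Function.update_self]
  choose! g hg hg' using hY
  let G : Module.End F (Tab m n →₀ F) := E - ∑ y ∈ Y, g y
  have hG : G ∈ R := by
    have e : G = E + (-1 : F) • ∑ y ∈ Y, g y := by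
      apply LinearMap.ext
      intro z
      simp only [G, LinearMap.sub_apply, LinearMap.add_apply, LinearMap.smul_apply, neg_smul,
        one_smul, sub_eq_add_neg]
    rw [e]
    exact R.add_mem hE (R.smul_mem (R.sum_mem fun y hy => hg y hy) _)
  have hG' : ∀ Z : Tab m n, G (Finsupp.single Z 1) =
      if Agr (s + 1) Z.1 T' ∧ Z.1 (s + 1) ∉ Y then Finsupp.single (spl (s + 1) T Z) 1 else 0 := by
    intro Z
    simp only [G, LinearMap.sub_apply, LinearMap.sum_apply, hE' Z]
    by_cases hag : Agr (s + 1) Z.1 T'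
    · rw [if_pos hag]
      have hu := hT1.upd (Z := Z.1) (Z.2.1.mono (by omega)) (hp.trans hag.pre.symm)
      have hterm : ∀ y ∈ Y, g y (Finsupp.single Z 1) =
          if Z.1 (s + 1) = y then Finsupp.single (spl (s + 1) T Z) 1 else 0 := by
        intro y hy
        rw [hg' y hy Z]
        by_cases hzy : Z.1 (s + 1) = y
        · have hag2 : Agr (s + 2) Z.1 (Function.update T' (s + 1) y) := by
            intro i hi
            by_cases e : i = s + 1
            · subst e; rw [Function.update_self, hzy]
            · rw [Function.update_of_ne e]; exact hag i (by omega)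
          rw [if_pos hag2, if_pos hzy]
          congr 1
          apply Subtype.ext
          rw [spl_val (by omega) (Finset.mem_filter.1 hy).2.1 (by rw [← hzy]; exact hu.2),
            spl_val (by omega) hT1 (hp.trans hag.pre.symm)]
          funext i
          rcases Nat.lt_trichotomy i (s + 1) with h3 | h3 | h3
          · rw [splice_lt (by omega), splice_lt h3, Function.update_of_ne (by omega)]
          · subst h3; rw [splice_lt (by omega), splice_ge le_rfl, Function.update_self, hzy]
          · rw [splice_ge (by omega), splice_ge (by omega)]
        · rw [if_neg hzy, if_neg]
          intro hc
          apply hzy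
          rw [hc (s + 1) (by omega), Function.update_self]
      rw [Finset.sum_congr rfl hterm, Finset.sum_ite_eq]
      by_cases hzY : Z.1 (s + 1) ∈ Y
      · simp [hzY]
      · simp [hzY, hag]
    · rw [if_neg hag, if_neg (fun hc => hag hc.1), zero_sub, neg_eq_zero]
      apply Finset.sum_eq_zero
      intro y hy
      rw [hg' y hy Z, if_neg]
      intro hc
      apply hag
      intro i hi
      rw [hc i (by omega), Function.update_of_ne (by omega)]
  have hq1 : 1 + q ≠ 0 := by
    have := h2 1 le_rfl (by omega)
    simpa [Finset.sum_range_succ] using this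
  -- analysis of the remaining tableaux
  have hrem : ∀ Z : Tab m n, Agr (s + 1) Z.1 T' → Z.1 (s + 1) ∉ Y →
      Adj (T s) (Z.1 (s + 1)) := by
    intro Z hag hzY
    have hZ2 : SU (s + 2) Z.1 := Z.2.1.mono (by omega)
    have hu := hT1.upd hZ2 (hp.trans hag.pre.symm)
    have hu' := hT1'.upd hZ2 hag.pre.symm
    have hbad : ¬ Good (s + 1) (pre (s + 2) (Function.update T (s + 1) (Z.1 (s + 1))))
        (Z.1 (s + 1)) := by
      intro hgd
      apply hzY
      exact Finset.mem_filter.2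
        ⟨Finset.mem_image.2 ⟨Z, Finset.mem_univ _, rfl⟩, hu.1, hu'.1, hgd⟩
    have := adj_of_bad hu.1 (by rw [Function.update_self]; exact hbad)
    rwa [Function.update_self, Function.update_of_ne (by omega)] at this
  have hTY : T (s + 1) ∉ Y := by
    intro hc
    have := (Finset.mem_filter.1 hc).2.2.2
    rw [Function.update_eq_self] at this
    exact hgood this
  have hfin : ∀ (c d : F), d ≠ 0 →
      (∀ y, Adj (T s) y → al v q (T s) y + c = if y = T (s + 1) then d else 0) →
      ∃ f ∈ R, Spec f (s + 2) T T' := by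
    intro c d hd hcd
    refine ⟨d⁻¹ • (opM v q n (s + 1) * G + c • G),
      R.smul_mem (R.add_mem (R.mul_mem (hR _ hs) hG) (R.smul_mem hG _)) _, ?_⟩
    intro Z
    simp only [LinearMap.smul_apply, LinearMap.add_apply, Module.End.mul_apply, hG' Z]
    by_cases hcond : Agr (s + 1) Z.1 T' ∧ Z.1 (s + 1) ∉ Y
    · rw [if_pos hcond]
      have hadj := hrem Z hcond.1 hcond.2
      have hW := spl_val (Z := Z) hs.le hT1 (hp.trans hcond.1.pre.symm)
      have e1 : (spl (s + 1) T Z).1 s = T s := by rw [hW, splice_lt (by omega)]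
      have e2 : (spl (s + 1) T Z).1 (s + 1) = Z.1 (s + 1) := by rw [hW, splice_ge le_rfl]
      rw [opM_succ_adj hs (by rw [e1, e2]; exact hadj), e1, e2, ← add_smul, hcd _ hadj]
      by_cases hzx : Z.1 (s + 1) = T (s + 1)
      · have hag2 : Agr (s + 2) Z.1 T' := by
          intro i hi
          by_cases e : i = s + 1
          · subst e; rw [hzx, hne]
          · exact hcond.1 i (by omega)
        rw [if_pos hzx, if_pos hag2, smul_smul, inv_mul_cancel₀ hd, one_smul]
        congr 1
        apply Subtype.ext
        rw [hW, spl_val (by omega) hT (by rw [h, hag2.pre])]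
        funext i
        rcases Nat.lt_trichotomy i (s + 1) with h3 | h3 | h3
        · rw [splice_lt (by omega), splice_lt (by omega)]
        · subst h3; rw [splice_ge le_rfl, splice_lt (by omega), hzx]
        · rw [splice_ge (by omega), splice_ge (by omega)]
      · rw [if_neg hzx, zero_smul, smul_zero, if_neg]
        intro hc
        exact hzx (by rw [hc (s + 1) (by omega), hne])
    · rw [if_neg hcond, map_zero, smul_zero, add_zero, smul_zero, if_neg]
      intro hc
      refine hcond ⟨fun i hi => hc i (by omega), ?_⟩
      rw [hc (s + 1) (by omega), ← hne]
      exact hTY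
  have hneq : rightOf (T s) ≠ belowOf (T s) := by
    intro e
    have := congrArg (fun z : Box m => z.2.1) e
    simp [rightOf, belowOf] at this
  rcases adj_of_bad hT hgood with e | e
  · apply hfin 1 (1 + q) hq1
    intro y hy
    rcases hy with rfl | rfl
    · rw [if_pos e.symm, al_right]; ring
    · rw [if_neg (by rw [e]; exact Ne.symm hneq), al_below v hq]; ring
  · apply hfin (-q) (-(1 + q)) (neg_ne_zero.2 hq1)
    intro y hy
    rcases hy with rfl | rfl
    · rw [if_neg (by rw [e]; exact hneq), al_right]; ring
    · rw [if_pos e.symm, al_below v hq]; ring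

theorem mu_all {v : Fin m → F} {q : F} (hq : q ≠ 0)
    (h1 : ∀ i : ℤ, i.natAbs < n → ∀ j j' : Fin m, j ≠ j' → q ^ i * v j - v j' ≠ 0)
    (h2 : ∀ i : ℕ, 1 ≤ i → i < n → (∑ j ∈ Finset.range (i + 1), q ^ j) ≠ 0)
    (R : Subalgebra F (Module.End F (Tab m n →₀ F))) (hR : ∀ i, i < n → opM v q n i ∈ R)
    (s : ℕ) : ∀ (_ : s < n) (S S' : ℕ → Box m), SU (s + 1) S → SU (s + 1) S' →
      pre (s + 1) S = pre (s + 1) S' → ∃ f ∈ R, Spec f (s + 1) S S' := by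
  induction s with
  | zero => intro hs S S' hS hS' h; exact mu_one hs h1 R hR S S' hS hS' h
  | succ s ih =>
    intro hs S S' hS hS' h
    exact mu_step hq h1 h2 R hR hs (ih (by omega)) S S' hS hS' h

/-- Matrix units in the image of the representation. -/
theorem rho_mu {v : Fin m → F} {q : F} (hn : 0 < n) (hq : q ≠ 0)
    (h1 : ∀ i : ℤ, i.natAbs < n → ∀ j j' : Fin m, j ≠ j' → q ^ i * v j - v j' ≠ 0)
    (h2 : ∀ i : ℕ, 1 ≤ i → i < n → (∑ j ∈ Finset.range (i + 1), q ^ j) ≠ 0)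
    (S S' : Tab m n) (h : pre n S.1 = pre n S'.1) :
    ∃ a : (CH F m n v q)ᵐᵒᵖ, ∀ Z : Tab m n, rho hq h1 h2 a (Finsupp.single Z 1) =
      if Z = S' then Finsupp.single S 1 else 0 := by
  obtain ⟨s, rfl⟩ : ∃ s, n = s + 1 := ⟨n - 1, by omega⟩
  obtain ⟨f, ⟨a, ha⟩, hf⟩ := mu_all hq h1 h2 (rho hq h1 h2).range
    (fun i hi => ⟨_, rho_gg hq h1 h2 ⟨i, hi⟩⟩) s (by omega) S.1 S'.1 S.2.1 S'.2.1 h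
  refine ⟨a, fun Z => ?_⟩
  have ha' : rho hq h1 h2 a = f := ha
  rw [ha', hf Z]
  have hiff : Agr (s + 1) Z.1 S'.1 ↔ Z = S' := by
    constructor
    · intro hag
      apply Subtype.ext
      funext i
      by_cases hi : i < s + 1
      · exact hag i hi
      · rw [Z.2.2 i (by omega), S'.2.2 i (by omega)]
    · rintro rfl i _; rfl
  by_cases hZ : Z = S'
  · rw [if_pos hZ, if_pos (hiff.2 hZ)]
    congr 1
    apply Subtype.ext
    rw [spl_val le_rfl S.2.1 (by rw [h, hZ])]
    funext i
    by_cases hi : i < s + 1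
    · exact splice_lt hi
    · rw [splice_ge (by omega), Z.2.2 i (by omega), S.2.2 i (by omega)]
  · rw [if_neg hZ, if_neg (fun hc => hZ (hiff.1 hc))]

end MatUnits2

/-! ### The upper bound for the dimension -/

section DimBound

/-- A sequence of elements satisfying the Hecke relations. -/
structure HRel {F B : Type} [Field F] [Ring B] [Algebra F B] (a : ℕ → B) (q : F) (n m : ℕ) :
    Prop where
  quad : ∀ i, 1 ≤ i → i < n → a i * a i = (q - 1) • a i + q • (1 : B)
  braid0 : 1 < n → a 0 * a 1 * a 0 * a 1 = a 1 * a 0 * a 1 * a 0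
  comm : ∀ i j, i + 2 ≤ j → j < n → a i * a j = a j * a i
  braid : ∀ i, 1 ≤ i → i + 1 < n → a (i + 1) * a i * a (i + 1) = a i * a (i + 1) * a i
  cyclo : ∃ c : ℕ → F, a 0 ^ m = ∑ e ∈ Finset.range m, c e • a 0 ^ e

variable {F B : Type} [Field F] [Ring B] [Algebra F B] {a : ℕ → B} {q : F} {n m : ℕ}

/-- Jucys–Murphy elements. -/
def LL (a : ℕ → B) (q : F) : ℕ → B
  | 0 => a 0
  | j + 1 => q⁻¹ • (a (j + 1) * LL a q j * a (j + 1))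

theorem LL_comm_big (h : HRel a q n m) (j : ℕ) : ∀ i, j + 2 ≤ i → i < n →
    Commute (LL a q j) (a i) := by
  induction j with
  | zero => intro i hi hin; exact h.comm 0 i hi hin
  | succ j ih =>
    intro i hi hin
    have c1 : Commute (a (j + 1)) (a i) := h.comm _ _ (by omega) hin
    exact (((c1.mul_left (ih i (by omega) hin)).mul_left c1).smul_left _)

theorem LL_comm_small (h : HRel a q n m) (j : ℕ) : ∀ i, i < j → j < n →
    Commute (LL a q j) (a i) := by
  induction j with
  | zero => intro i hi; omega
  | succ j ih =>
    intro i hi hin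
    by_cases hij : i < j
    · have c1 : Commute (a (j + 1)) (a i) := (h.comm _ _ (by omega) hin).symm
      exact (((c1.mul_left (ih i (by omega) (by omega))).mul_left c1).smul_left _)
    · have : i = j := by omega
      subst this
      apply Commute.smul_left
      cases i with
      | zero =>
        have := h.braid0 (by omega)
        show a 1 * a 0 * a 1 * a 0 = a 0 * (a 1 * a 0 * a 1)
        rw [← this]
        simp only [mul_assoc]
      | succ i =>
        have hb := h.braid (i + 1) (by omega) hin
        have hc : LL a q i * a (i + 2) = a (i + 2) * LL a q i :=
          LL_comm_big h i (i + 2) (by omega) hin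
        show Commute (a (i + 2) * (q⁻¹ • (a (i + 1) * LL a q i * a (i + 1))) * a (i + 2))
          (a (i + 1))
        rw [mul_smul_comm, smul_mul_assoc]
        apply Commute.smul_left
        show a (i + 2) * (a (i + 1) * LL a q i * a (i + 1)) * a (i + 2) * a (i + 1) =
          a (i + 1) * (a (i + 2) * (a (i + 1) * LL a q i * a (i + 1)) * a (i + 2))
        have hb' : a (i + 2) * a (i + 1) * a (i + 2) = a (i + 1) * a (i + 2) * a (i + 1) := hb
        calc a (i + 2) * (a (i + 1) * LL a q i * a (i + 1)) * a (i + 2) * a (i + 1)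
            = a (i + 2) * a (i + 1) * LL a q i * (a (i + 1) * a (i + 2) * a (i + 1)) := by
              simp only [mul_assoc]
          _ = a (i + 2) * a (i + 1) * LL a q i * (a (i + 2) * a (i + 1) * a (i + 2)) := by rw [hb']
          _ = a (i + 2) * a (i + 1) * (LL a q i * a (i + 2)) * (a (i + 1) * a (i + 2)) := by
              simp only [mul_assoc]
          _ = (a (i + 2) * a (i + 1) * a (i + 2)) * LL a q i * (a (i + 1) * a (i + 2)) := by
              rw [hc]; simp only [mul_assoc]
          _ = a (i + 1) * (a (i + 2) * (a (i + 1) * LL a q i * a (i + 1)) * a (i + 2)) := by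
              rw [hb']; simp only [mul_assoc]

theorem LL_comm_LL (h : HRel a q n m) (j : ℕ) (hj : j < n) (i : ℕ) (hi : i < j) :
    Commute (LL a q j) (LL a q i) := by
  induction i with
  | zero => exact LL_comm_small h j 0 hi hj
  | succ i ih =>
    have c1 := LL_comm_small h j (i + 1) hi hj
    exact ((c1.mul_right (ih (by omega))).mul_right c1).smul_right _

theorem LL_mul (h : HRel a q n m) (hq : q ≠ 0) (j : ℕ) (hj : j + 1 < n) :
    LL a q (j + 1) * a (j + 1) = (q - 1) • LL a q (j + 1) + a (j + 1) * LL a q j := by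
  have := h.quad (j + 1) (by omega) hj
  simp only [LL]
  rw [smul_mul_assoc, mul_assoc (a (j + 1) * LL a q j), this]
  simp only [mul_add, mul_smul_comm, mul_one, smul_add, smul_smul]
  rw [inv_mul_cancel₀ hq, one_smul, mul_comm q⁻¹]

theorem LL_pow_mul (h : HRel a q n m) (hq : q ≠ 0) (j : ℕ) (hj : j + 1 < n) (e : ℕ) :
    ∃ d ∈ Submodule.span F {y | ∃ s t, s ≤ e ∧ y = LL a q j ^ t * LL a q (j + 1) ^ s},
      LL a q (j + 1) ^ e * a (j + 1) = a (j + 1) * LL a q j ^ e + d := by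
  have hc : Commute (LL a q (j + 1)) (LL a q j) := LL_comm_LL h (j + 1) hj j (by omega)
  induction e with
  | zero => exact ⟨0, Submodule.zero_mem _, by simp⟩
  | succ e ih =>
    obtain ⟨d, hd, hd'⟩ := ih
    refine ⟨(q - 1) • (LL a q j ^ e * LL a q (j + 1) ^ 1) + LL a q (j + 1) * d, ?_, ?_⟩
    · refine Submodule.add_mem _ (Submodule.smul_mem _ _ (Submodule.subset_span
        ⟨1, e, by omega, rfl⟩)) ?_
      clear hd'
      induction hd using Submodule.span_induction with
      | mem y hy =>
        obtain ⟨s, t, hs, rfl⟩ := hy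
        refine Submodule.subset_span ⟨s + 1, t, by omega, ?_⟩
        rw [← mul_assoc, (hc.pow_right t).eq, mul_assoc, pow_succ']
      | zero => simp
      | add x y _ _ hx hy => rw [mul_add]; exact Submodule.add_mem _ hx hy
      | smul c x _ hx => rw [mul_smul_comm]; exact Submodule.smul_mem _ _ hx
    · rw [pow_succ', mul_assoc, hd', mul_add, ← mul_assoc, LL_mul h hq j hj, add_mul,
        smul_mul_assoc, (hc.pow_right e).eq, pow_one, pow_succ' (LL a q j), mul_assoc]
      abel

/-- `XX a j d = a (j+d) ⋯ a (j+1)`. -/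
def XX (a : ℕ → B) (j : ℕ) : ℕ → B
  | 0 => 1
  | d + 1 => a (j + d + 1) * XX a j d

theorem XX_succ (j d : ℕ) : XX a j (d + 1) = XX a (j + 1) d * a (j + 1) := by
  induction d with
  | zero => simp [XX]
  | succ d ih =>
    rw [XX, ih, XX, mul_assoc]
    congr 2
    omega

theorem XX_comm (j d : ℕ) (b : B) (hb : ∀ i, j + 1 ≤ i → i ≤ j + d → Commute b (a i)) :
    Commute b (XX a j d) := by
  induction d with
  | zero => exact Commute.one_right b
  | succ d ih =>
    exact (hb _ (by omega) (by omega)).mul_right (ih fun i h1 h2 => hb i h1 (by omega))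

theorem XX_mul (h : HRel a q n m) (j d i : ℕ) (hi : j + 1 ≤ i) (hi' : i + 1 ≤ j + d)
    (hn : j + d < n) : XX a j d * a (i + 1) = a i * XX a j d := by
  induction d with
  | zero => omega
  | succ d ih =>
    by_cases hid : i + 1 ≤ j + d
    · have := h.comm i (j + d + 1) (by omega) (by omega)
      rw [XX, mul_assoc, ih hid (by omega), ← mul_assoc, ← this, mul_assoc]
    · have : i = j + d := by omega
      subst this
      obtain ⟨d, rfl⟩ : ∃ e, d = e + 1 := ⟨d - 1, by omega⟩
      have hb := h.braid (j + d + 1) (by omega) (by omega)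
      have hc : Commute (a (j + d + 2)) (XX a j d) :=
        XX_comm j d _ fun i h1 h2 => (h.comm i (j + d + 2) (by omega) (by omega)).symm
      show a (j + d + 2) * (a (j + d + 1) * XX a j d) * a (j + d + 2) =
        a (j + d + 1) * (a (j + d + 2) * (a (j + d + 1) * XX a j d))
      have hb' : a (j + d + 2) * a (j + d + 1) * a (j + d + 2) =
        a (j + d + 1) * a (j + d + 2) * a (j + d + 1) := hb
      rw [mul_assoc, mul_assoc, ← hc.eq, ← mul_assoc, ← mul_assoc, hb']
      simp only [mul_assoc]

/-- The subalgebra generated by the first `r` elements. -/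
def AA (F : Type) {B : Type} [Field F] [Ring B] [Algebra F B] (a : ℕ → B) (r : ℕ) :
    Subalgebra F B := Algebra.adjoin F (a '' {i | i < r})

theorem mem_AA {r i : ℕ} (hi : i < r) : a i ∈ AA F a r :=
  Algebra.subset_adjoin ⟨i, hi, rfl⟩

theorem LL_mem {r i : ℕ} (hi : i < r) : LL a q i ∈ AA F a r := by
  induction i with
  | zero => exact mem_AA hi
  | succ i ih =>
    exact Subalgebra.smul_mem _ (Subalgebra.mul_mem _ (Subalgebra.mul_mem _ (mem_AA hi)
      (ih (by omega))) (mem_AA hi)) _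

/-- The spanning subspace. -/
def NN (a : ℕ → B) (q : F) (m r : ℕ) : Submodule F B :=
  Submodule.span F {y | ∃ x ∈ AA F a r, ∃ j d e, j + d = r ∧ e < m ∧
    y = x * (XX a j d * LL a q j ^ e)}

theorem NN_base {r j d e : ℕ} (hj : j + d = r) (he : e < m) :
    XX a j d * LL a q j ^ e ∈ NN a q m r :=
  Submodule.subset_span ⟨1, Subalgebra.one_mem _, j, d, e, hj, he, by rw [one_mul]⟩

theorem NN_left {r : ℕ} {x y : B} (hx : x ∈ AA F a r) (hy : y ∈ NN a q m r) :
    x * y ∈ NN a q m r := by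
  induction hy using Submodule.span_induction with
  | mem y hy =>
    obtain ⟨z, hz, j, d, e, h1, h2, rfl⟩ := hy
    exact Submodule.subset_span ⟨x * z, Subalgebra.mul_mem _ hx hz, j, d, e, h1, h2,
      (mul_assoc _ _ _).symm⟩
  | zero => simp
  | add x y _ _ hx hy => rw [mul_add]; exact Submodule.add_mem _ hx hy
  | smul c x _ hx => rw [mul_smul_comm]; exact Submodule.smul_mem _ _ hx

/-- Elements `X * D` with `D` in the span of products of Murphy elements. -/
theorem NN_D (h : HRel a q n m) {r j d e : ℕ} (hr : r < n) (hj : j + 1 + d = r) (he : e < m)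
    {w : B} (hw : w ∈ Submodule.span F {y | ∃ s t, s ≤ e ∧ y = LL a q j ^ t * LL a q (j + 1) ^ s})
    (b : B) (hb : ∀ s, s ≤ e → XX a (j + 1) d * LL a q (j + 1) ^ s * b ∈ NN a q m r) :
    XX a (j + 1) d * w * b ∈ NN a q m r := by
  induction hw using Submodule.span_induction with
  | mem y hy =>
    obtain ⟨s, t, hs, rfl⟩ := hy
    have hc : Commute (LL a q j) (XX a (j + 1) d) :=
      XX_comm _ _ _ fun i h1 h2 => LL_comm_big h j i (by omega) (by omega)
    have : XX a (j + 1) d * (LL a q j ^ t * LL a q (j + 1) ^ s) * b =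
        LL a q j ^ t * (XX a (j + 1) d * LL a q (j + 1) ^ s * b) := by
      rw [← mul_assoc, ← (hc.pow_left t).eq]
      simp only [mul_assoc]
    rw [this]
    exact NN_left (Subalgebra.pow_mem _ (LL_mem (by omega)) _) (hb s hs)
  | zero => simp
  | add x y _ _ hx hy => rw [mul_add, add_mul]; exact Submodule.add_mem _ hx hy
  | smul c x _ hx =>
    rw [mul_smul_comm, smul_mul_assoc]; exact Submodule.smul_mem _ _ hx

theorem NN_eq (h : HRel a q n m) (hq : q ≠ 0) {r j d e : ℕ} (hr : r < n) (hj : j + d = r)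
    (he : e < m) : XX a j d * LL a q j ^ e * a j ∈ NN a q m r := by
  cases j with
  | zero =>
    show XX a 0 d * a 0 ^ e * a 0 ∈ _
    rw [mul_assoc, ← pow_succ]
    by_cases hem : e + 1 < m
    · exact NN_base (q := q) hj hem
    · have : e + 1 = m := by omega
      obtain ⟨c, hc⟩ := h.cyclo
      rw [this, hc, Finset.mul_sum]
      refine Submodule.sum_mem _ fun i hi => ?_
      rw [mul_smul_comm]
      exact Submodule.smul_mem _ _ (NN_base (q := q) hj (Finset.mem_range.1 hi))
  | succ j =>
    obtain ⟨w, hw, hw'⟩ := LL_pow_mul h hq j (by omega) e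
    rw [mul_assoc, hw', mul_add, ← mul_assoc, ← XX_succ]
    refine Submodule.add_mem _ (NN_base (by omega) he) ?_
    have := NN_D h hr hj he hw 1 (fun s hs => by rw [mul_one]; exact NN_base hj (by omega))
    rwa [mul_one] at this

theorem NN_right (h : HRel a q n m) (hq : q ≠ 0) {r : ℕ} (hr : r < n) {y : B}
    (hy : y ∈ NN a q m r) {i : ℕ} (hi : i ≤ r) : y * a i ∈ NN a q m r := by
  induction hy using Submodule.span_induction with
  | zero => simp
  | add x y _ _ hx hy => rw [add_mul]; exact Submodule.add_mem _ hx hy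
  | smul c x _ hx => rw [smul_mul_assoc]; exact Submodule.smul_mem _ _ hx
  | mem y hy =>
    obtain ⟨x, hx, j, d, e, hj, he, rfl⟩ := hy
    rw [mul_assoc]
    apply NN_left hx
    rcases Nat.lt_trichotomy i j with hij | hij | hij
    · have c1 := (LL_comm_small h j i hij (by omega)).pow_left e
      have c2 : Commute (a i) (XX a j d) :=
        XX_comm _ _ _ fun l h1 h2 => h.comm i l (by omega) (by omega)
      rw [mul_assoc, c1.eq, ← mul_assoc, ← c2.eq, mul_assoc]
      exact NN_left (mem_AA (by omega)) (NN_base hj he)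
    · subst hij
      exact NN_eq h hq hr hj he
    · by_cases hij2 : i = j + 1
      · subst hij2
        obtain ⟨d, rfl⟩ : ∃ f, d = f + 1 := ⟨d - 1, by omega⟩
        obtain ⟨w, hw, hw'⟩ := LL_pow_mul h hq j (by omega) e
        have e1 : XX a j (d + 1) * LL a q j ^ e * a (j + 1) =
            (q - 1) • (XX a (j + 1) d * LL a q (j + 1) ^ e * a (j + 1)) +
            q • (XX a (j + 1) d * LL a q (j + 1) ^ e) - XX a (j + 1) d * w * a (j + 1) := by
          have e2 : a (j + 1) * LL a q j ^ e = LL a q (j + 1) ^ e * a (j + 1) - w := by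
            rw [hw']; abel
          have e3 : LL a q (j + 1) ^ e * a (j + 1) * a (j + 1) =
              (q - 1) • (LL a q (j + 1) ^ e * a (j + 1)) + q • LL a q (j + 1) ^ e := by
            rw [mul_assoc, h.quad (j + 1) (by omega) (by omega), mul_add, mul_smul_comm,
              mul_smul_comm, mul_one]
          rw [XX_succ, mul_assoc (XX a (j + 1) d), e2, mul_assoc, sub_mul, e3, mul_sub, mul_add,
            mul_smul_comm, mul_smul_comm]
          simp only [mul_assoc]
        rw [e1]
        have k1 : ∀ s, s ≤ e → XX a (j + 1) d * LL a q (j + 1) ^ s * a (j + 1) ∈ NN a q m r :=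
          fun s hs => NN_eq h hq hr (by omega) (by omega)
        exact Submodule.sub_mem _ (Submodule.add_mem _ (Submodule.smul_mem _ _ (k1 e le_rfl))
          (Submodule.smul_mem _ _ (NN_base (by omega) he)))
          (NN_D h hr (by omega) he hw _ k1)
      · obtain ⟨i, rfl⟩ : ∃ l, i = l + 1 := ⟨i - 1, by omega⟩
        have c1 := (LL_comm_big h j (i + 1) (by omega) (by omega)).pow_left e
        rw [mul_assoc, c1.eq, ← mul_assoc, XX_mul h j d i (by omega) (by omega) (by omega),
          mul_assoc]
        exact NN_left (mem_AA (by omega)) (NN_base hj he)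

theorem AA_le_NN (h : HRel a q n m) (hq : q ≠ 0) (hm : 0 < m) {r : ℕ} (hr : r < n) :
    ∀ y ∈ AA F a (r + 1), y ∈ NN a q m r := by
  have key : ∀ y ∈ AA F a (r + 1), ∀ z ∈ NN a q m r, z * y ∈ NN a q m r := by
    intro y hy
    induction hy using Algebra.adjoin_induction with
    | mem y hy =>
      obtain ⟨i, hi, rfl⟩ := hy
      intro z hz
      exact NN_right h hq hr hz (Nat.lt_succ_iff.1 hi)
    | algebraMap c =>
      intro z hz
      rw [← Algebra.commutes, ← Algebra.smul_def]
      exact Submodule.smul_mem _ _ hz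
    | add x y _ _ hx hy =>
      intro z hz; rw [mul_add]; exact Submodule.add_mem _ (hx z hz) (hy z hz)
    | mul x y _ _ hx hy =>
      intro z hz; rw [← mul_assoc]; exact hy _ (hx z hz)
  intro y hy
  have h1 : (1 : B) ∈ NN a q m r := by
    have := NN_base (a := a) (q := q) (r := r) (j := r) (d := 0) (e := 0) (m := m) rfl hm
    simpa [XX] using this
  simpa using key y hy 1 h1

theorem AA_span (h : HRel a q n m) (hq : q ≠ 0) (hm : 0 < m) (r : ℕ) : r ≤ n →
    ∃ s : Finset B, s.card ≤ m ^ r * r.factorial ∧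
      ∀ y ∈ AA F a r, y ∈ Submodule.span F (s : Set B) := by
  induction r with
  | zero =>
    intro _
    refine ⟨{1}, by simp, fun y hy => ?_⟩
    have : AA F a 0 = ⊥ := by simp [AA]
    rw [this, Algebra.mem_bot] at hy
    obtain ⟨c, rfl⟩ := hy
    rw [Algebra.algebraMap_eq_smul_one]
    exact Submodule.smul_mem _ _ (Submodule.subset_span (by simp))
  | succ r ih =>
    intro hr
    obtain ⟨s, hs, hs'⟩ := ih (by omega)
    refine ⟨(s ×ˢ (Finset.range (r + 1) ×ˢ Finset.range m)).image
      (fun p => p.1 * (XX a p.2.1 (r - p.2.1) * LL a q p.2.1 ^ p.2.2)), ?_, ?_⟩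
    · refine Finset.card_image_le.trans ?_
      simp only [Finset.card_product, Finset.card_range]
      calc s.card * ((r + 1) * m) ≤ (m ^ r * r.factorial) * ((r + 1) * m) :=
            Nat.mul_le_mul_right _ hs
        _ = m ^ (r + 1) * (r + 1).factorial := by rw [Nat.factorial_succ]; ring
    · intro y hy
      have hy2 := AA_le_NN h hq hm (by omega) y hy
      clear hy
      induction hy2 using Submodule.span_induction with
      | zero => exact Submodule.zero_mem _
      | add x y _ _ hx hy => exact Submodule.add_mem _ hx hy
      | smul c x _ hx => exact Submodule.smul_mem _ _ hx
      | mem y hy =>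
        obtain ⟨x, hx, j, d, e, hj, he, rfl⟩ := hy
        have hx' := hs' x hx
        clear hx
        induction hx' using Submodule.span_induction with
        | zero => simp
        | add x y _ _ hx hy => rw [add_mul]; exact Submodule.add_mem _ hx hy
        | smul c x _ hx => rw [smul_mul_assoc]; exact Submodule.smul_mem _ _ hx
        | mem x hx =>
          apply Submodule.subset_span
          simp only [Finset.coe_image, Set.mem_image, Finset.mem_coe, Finset.mem_product,
            Finset.mem_range]
          refine ⟨(x, j, e), ⟨hx, by simp; omega, he⟩, ?_⟩
          have : r - j = d := by omega
          simp [this]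

end DimBound

/-! ### The dimension bound for the Hecke algebra -/

section DimBound2

variable {F : Type} [Field F] {m n : ℕ} [NeZero m]

theorem CH_rel {v : Fin m → F} {q : F} {x y : FreeAlgebra F (Fin n)} (h : Rel F m n v q x y) :
    (RingQuot.mkAlgHom F (Rel F m n v q) x : CH F m n v q) =
      RingQuot.mkAlgHom F (Rel F m n v q) y :=
  RingQuot.mkAlgHom_rel F h

/-- The generators, as a sequence. -/
def gs (n : ℕ) (v : Fin m → F) (q : F) (i : ℕ) : CH F m n v q :=
  if h : i < n then gg v q ⟨i, h⟩ else 0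

theorem gs_hrel (hn : 0 < n) (v : Fin m → F) (q : F) : HRel (gs n v q) q n m := by
  let π : FreeAlgebra F (Fin n) →ₐ[F] CH F m n v q := RingQuot.mkAlgHom F (Rel F m n v q)
  have hg : ∀ i (h : i < n), gs n v q i = π (FreeAlgebra.ι F ⟨i, h⟩) := by
    intro i h
    rw [gs, dif_pos h]; rfl
  have hrel : ∀ {x y}, Rel F m n v q x y → π x = π y := fun h => CH_rel h
  refine ⟨?_, ?_, ?_, ?_, ?_⟩
  · intro i hi hin
    have := hrel (Rel.quad ⟨i, hin⟩ hi)
    rw [hg i hin]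
    generalize FreeAlgebra.ι F (⟨i, hin⟩ : Fin n) = z at this ⊢
    rw [map_mul, map_sub, map_add, map_one, map_zero, AlgHom.commutes,
      Algebra.algebraMap_eq_smul_one] at this
    generalize π z = w at this ⊢
    rw [sub_mul, mul_add, smul_mul_assoc, one_mul, mul_one, smul_add] at this
    rw [sub_smul, one_smul]
    rw [sub_eq_zero] at this
    rw [eq_sub_of_add_eq this]
    abel
  · intro h
    have := hrel (Rel.braid0 ⟨0, hn⟩ ⟨1, h⟩ rfl rfl)
    rw [hg 0 hn, hg 1 h]
    simpa only [map_mul] using this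
  · intro i j hij hj
    have := hrel (Rel.comm ⟨i, by omega⟩ ⟨j, hj⟩ hij)
    rw [hg i (by omega), hg j hj]
    simpa only [map_mul] using this
  · intro i hi hin
    have := hrel (Rel.braid ⟨i, by omega⟩ ⟨i + 1, hin⟩ hi rfl)
    rw [hg i (by omega), hg (i + 1) hin]
    simpa only [map_mul] using this
  · have := hrel (Rel.cyclo ⟨0, hn⟩ rfl)
    rw [hg 0 hn]
    generalize FreeAlgebra.ι F (⟨0, hn⟩ : Fin n) = z at this ⊢
    rw [map_zero, map_list_prod, List.map_ofFn] at this
    let p : Polynomial F := (List.ofFn fun j : Fin m => Polynomial.X - Polynomial.C (v j)).prod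
    have hp : p = ∏ j : Fin m, (Polynomial.X - Polynomial.C (v j)) := List.prod_ofFn
    have hmon : p.Monic := by
      rw [hp]; exact Polynomial.monic_prod_of_monic _ _ fun j _ => Polynomial.monic_X_sub_C _
    have hdeg : p.natDegree = m := by
      rw [hp, Polynomial.natDegree_prod_of_monic _ _ fun j _ => Polynomial.monic_X_sub_C _]
      simp
    have hev : Polynomial.aeval (π z) p = 0 := by
      rw [← this]
      simp only [p]
      rw [map_list_prod, List.map_ofFn]
      congr 2
      funext j
      simp
    rw [hmon.as_sum, hdeg] at hev
    refine ⟨fun e => - p.coeff e, ?_⟩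
    rw [map_add, map_pow, Polynomial.aeval_X, map_sum] at hev
    rw [eq_neg_of_add_eq_zero_left hev, ← Finset.sum_neg_distrib]
    refine Finset.sum_congr rfl fun e _ => ?_
    rw [map_mul, map_pow, Polynomial.aeval_X, Polynomial.aeval_C, ← Algebra.smul_def, neg_smul]

theorem CH_dim (hn : 0 < n) (v : Fin m → F) {q : F} (hq : q ≠ 0) :
    Module.Finite F (CH F m n v q) ∧ Module.finrank F (CH F m n v q) ≤ m ^ n * n.factorial := by
  obtain ⟨s, hs, hs'⟩ := AA_span (gs_hrel hn v q) hq (NeZero.pos m) n le_rfl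
  have htop : AA F (gs n v q) n = ⊤ := by
    rw [← top_le_iff, ← gg_adjoin, AA]
    apply Algebra.adjoin_mono
    rintro _ ⟨i, rfl⟩
    exact ⟨i.1, i.2, by rw [gs, dif_pos i.2]⟩
  have hspan : Submodule.span F (s : Set (CH F m n v q)) = ⊤ := by
    rw [eq_top_iff]
    intro y _
    exact hs' y (by rw [htop]; trivial)
  refine ⟨⟨⟨s, hspan⟩⟩, ?_⟩
  have := finrank_span_finset_le_card (R := F) s
  rw [Set.finrank, hspan, finrank_top] at this
  exact this.trans hs

end DimBound2

/-! ### Counting pairs of standard tableaux -/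

section Counting

variable {m : ℕ}

theorem IsLow.bound {D : Finset (Box m)} (hl : IsLow D) {c : Fin m} {a b : ℕ}
    (hm : (c, a, b) ∈ D) : a < D.card ∧ b < D.card := by
  have h0 := hl.le hm (Nat.zero_le _) (Nat.zero_le _)
  have ha := hl.le hm le_rfl (Nat.zero_le _)
  have hb := hl.le hm (Nat.zero_le _) le_rfl
  have e1 := ct_same hl h0 ha rfl
  have e2 := ct_same hl h0 hb rfl
  simp only [ct] at e1 e2
  constructor
  · show a < D.card
    omega
  · show b < D.card
    omega

theorem rl_exists (D : Finset (Box m)) (c : Fin m) (a : ℕ) : ∃ b, (c, a, b) ∉ D := by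
  by_contra hc
  push Not at hc
  have : Set.Infinite (Set.range fun b : ℕ => ((c, a, b) : Box m)) :=
    Set.infinite_range_of_injective fun b b' h => by simpa using h
  apply this
  apply D.finite_toSet.subset
  rintro _ ⟨b, rfl⟩
  exact hc b

/-- Row lengths. -/
def rl (D : Finset (Box m)) (c : Fin m) (a : ℕ) : ℕ := Nat.find (rl_exists D c a)

theorem mem_iff_rl {D : Finset (Box m)} (hD : IsLow D) {c : Fin m} {a b : ℕ} :
    (c, a, b) ∈ D ↔ b < rl D c a := by
  constructor
  · intro h
    by_contra hc
    exact Nat.find_spec (rl_exists D c a) (hD.le h le_rfl (not_lt.1 hc))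
  · intro h
    have := Nat.find_min (rl_exists D c a) h
    simpa using this

theorem rl_mono {D : Finset (Box m)} (hD : IsLow D) (c : Fin m) (a : ℕ) :
    rl D c (a + 1) ≤ rl D c a := by
  by_contra hc
  have h1 := (mem_iff_rl hD).2 (not_le.1 hc)
  have h2 := (mem_iff_rl hD).1 ((hD c a _).1 h1)
  omega

theorem rl_anti {D : Finset (Box m)} (hD : IsLow D) (c : Fin m) : Antitone (rl D c) :=
  antitone_nat_of_succ_le fun a => rl_mono hD c a

theorem isLow_of_rl {D : Finset (Box m)} {l : Fin m → ℕ → ℕ} (hl : ∀ c a, l c (a + 1) ≤ l c a)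
    (h : ∀ c a b, (c, a, b) ∈ D ↔ b < l c a) : IsLow D := by
  intro c a b
  have := hl c a
  rw [h, h, h]
  omega

/-- Removable boxes. -/
def Rem (D : Finset (Box m)) : Finset (Box m) := D.filter fun x => IsLow (D.erase x)

/-- Addable boxes. -/
def Add (D : Finset (Box m)) : Finset (Box m) :=
  (Finset.univ ×ˢ (Finset.range (D.card + 1) ×ˢ Finset.range (D.card + 1))).filter
    fun y => y ∉ D ∧ IsLow (insert y D)

theorem mem_Rem {D : Finset (Box m)} {x : Box m} : x ∈ Rem D ↔ x ∈ D ∧ IsLow (D.erase x) := by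
  simp [Rem]

theorem mem_Add {D : Finset (Box m)} {y : Box m} : y ∈ Add D ↔ y ∉ D ∧ IsLow (insert y D) := by
  constructor
  · intro h; exact (Finset.mem_filter.1 h).2
  · intro h
    refine Finset.mem_filter.2 ⟨?_, h⟩
    obtain ⟨c, a, b⟩ := y
    have h1 := h.2.bound (Finset.mem_insert_self _ _)
    have h2 := Finset.card_insert_le (c, a, b) D
    simp only [Finset.mem_product, Finset.mem_univ, Finset.mem_range, true_and]
    omega

theorem mem_Rem_rl {D : Finset (Box m)} (hD : IsLow D) {c : Fin m} {a b : ℕ} :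
    (c, a, b) ∈ Rem D ↔ rl D c a = b + 1 ∧ rl D c (a + 1) ≤ b := by
  rw [mem_Rem]
  constructor
  · rintro ⟨h1, h2⟩
    have h1' := (mem_iff_rl hD).1 h1
    have h3 := h2 c a b
    constructor
    · by_contra hc
      have h4 : (c, a, b + 1) ∈ D := (mem_iff_rl hD).2 (by omega)
      have := h3.2 (Finset.mem_erase.2 ⟨by simp, h4⟩)
      simp at this
    · by_contra hc
      have h4 : (c, a + 1, b) ∈ D := (mem_iff_rl hD).2 (by omega)
      have := h3.1 (Finset.mem_erase.2 ⟨by simp, h4⟩)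
      simp at this
  · rintro ⟨h1, h2⟩
    refine ⟨(mem_iff_rl hD).2 (by omega), ?_⟩
    intro c' a' b'
    simp only [Finset.mem_erase, Prod.mk.injEq, ne_eq]
    constructor
    · rintro ⟨h3, h4⟩
      refine ⟨?_, (hD _ _ _).1 h4⟩
      rintro ⟨rfl, rfl, rfl⟩
      have := (mem_iff_rl hD).1 h4
      omega
    · rintro ⟨h3, h4⟩
      refine ⟨?_, (hD _ _ _).2 h4⟩
      rintro ⟨rfl, rfl, rfl⟩
      have := (mem_iff_rl hD).1 h4
      omega

theorem mem_Add_rl {D : Finset (Box m)} (hD : IsLow D) {c : Fin m} {a b : ℕ} :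
    (c, a, b) ∈ Add D ↔ rl D c a = b ∧ (a = 0 ∨ b < rl D c (a - 1)) := by
  rw [mem_Add]
  constructor
  · rintro ⟨h1, h2⟩
    have h1' : ¬ b < rl D c a := fun h => h1 ((mem_iff_rl hD).2 h)
    constructor
    · by_contra hc
      obtain ⟨b, rfl⟩ : ∃ d, b = d + 1 := ⟨b - 1, by omega⟩
      have := (h2 c a b).2 (Finset.mem_insert_self _ _)
      have := (mem_iff_rl hD).1 ((Finset.mem_insert.1 this).resolve_left (by simp))
      omega
    · rcases Nat.eq_zero_or_pos a with h0 | h0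
      · exact Or.inl h0
      · right
        obtain ⟨a, rfl⟩ : ∃ d, a = d + 1 := ⟨a - 1, by omega⟩
        have := (h2 c a b).1 (Finset.mem_insert_self _ _)
        exact (mem_iff_rl hD).1 ((Finset.mem_insert.1 this).resolve_left (by simp))
  · rintro ⟨h1, h2⟩
    refine ⟨fun h => ?_, ?_⟩
    · have := (mem_iff_rl hD).1 h; omega
    · intro c' a' b'
      simp only [Finset.mem_insert, Prod.mk.injEq]
      constructor
      · rintro (⟨rfl, rfl, rfl⟩ | h)
        · right
          exact (mem_iff_rl hD).2 (by simpa using h2)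
        · exact Or.inr ((hD _ _ _).1 h)
      · rintro (⟨rfl, rfl, rfl⟩ | h)
        · right
          exact (mem_iff_rl hD).2 (by omega)
        · exact Or.inr ((hD _ _ _).2 h)

theorem card_Add {D : Finset (Box m)} (hD : IsLow D) : (Add D).card = (Rem D).card + m := by
  have e : Add D = (Rem D).image (fun x => (x.1, x.2.1 + 1, rl D x.1 (x.2.1 + 1))) ∪
      (Finset.univ : Finset (Fin m)).image (fun c => (c, 0, rl D c 0)) := by
    ext ⟨c, a, b⟩
    rw [mem_Add_rl hD]
    simp only [Finset.mem_union, Finset.mem_image, Finset.mem_univ, true_and, Prod.mk.injEq,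
      Prod.exists]
    constructor
    · rintro ⟨h1, h2⟩
      rcases Nat.eq_zero_or_pos a with h0 | h0
      · right; exact ⟨c, rfl, h0.symm, by rw [← h1, h0]⟩
      · left
        obtain ⟨a, rfl⟩ : ∃ d, a = d + 1 := ⟨a - 1, by omega⟩
        simp only [Nat.add_sub_cancel] at h2
        exact ⟨c, a, rl D c a - 1, (mem_Rem_rl hD).2 (by omega), rfl, rfl, h1⟩
    · rintro (⟨c', a', b', h, rfl, rfl, rfl⟩ | ⟨c', rfl, rfl, rfl⟩)
      · have := (mem_Rem_rl hD).1 h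
        refine ⟨rfl, Or.inr ?_⟩
        simp only [Nat.add_sub_cancel]
        omega
      · exact ⟨rfl, Or.inl rfl⟩
  rw [e, Finset.card_union_of_disjoint, Finset.card_image_of_injOn,
    Finset.card_image_of_injective, Finset.card_univ, Fintype.card_fin]
  · intro c c' h; simpa using (Prod.ext_iff.1 h).1
  · rintro ⟨c, a, b⟩ hx ⟨c', a', b'⟩ hx' h
    simp only [Prod.mk.injEq] at h
    obtain ⟨rfl, h, -⟩ := h
    have : a = a' := by omega
    subst this
    have h1 := (mem_Rem_rl hD).1 hx
    have h2 := (mem_Rem_rl hD).1 hx'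
    have : b = b' := by omega
    rw [this]
  · rw [Finset.disjoint_left]
    intro x h1 h2
    obtain ⟨y, _, rfl⟩ := Finset.mem_image.1 h1
    obtain ⟨z, _, h⟩ := Finset.mem_image.1 h2
    simp at h

/-- Recursive count of standard tableaux. -/
def ff : ℕ → Finset (Box m) → ℕ
  | 0, D => if D = ∅ then 1 else 0
  | r + 1, D => ∑ x ∈ Rem D, ff r (D.erase x)

theorem swap_pairs {D : Finset (Box m)} (hD : IsLow D) (x y : Box m) :
    (y ∈ Add D ∧ x ∈ (Rem (insert y D)).erase y) ↔
      (y ∈ (Add (D.erase x)).erase x ∧ x ∈ Rem D) := by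
  simp only [mem_Add, mem_Rem, Finset.mem_erase]
  constructor
  · rintro ⟨⟨h1, h2⟩, h3, h4, h5⟩
    have hx : x ∈ D := (Finset.mem_insert.1 h4).resolve_left h3
    have e : insert y (D.erase x) = (insert y D).erase x :=
      (Finset.erase_insert_of_ne (Ne.symm h3)).symm
    have e2 : D.erase x = D ∩ (insert y D).erase x := by
      ext z
      simp only [Finset.mem_erase, Finset.mem_inter, Finset.mem_insert]
      tauto
    refine ⟨⟨Ne.symm h3, fun hc => h1 hc.2, by rw [e]; exact h5⟩, hx, ?_⟩
    rw [e2]; exact hD.inter h5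
  · rintro ⟨⟨h1, h2, h3⟩, h4, h5⟩
    have hy : y ∉ D := fun hc => h2 ⟨h1, hc⟩
    have e : insert y (D.erase x) = (insert y D).erase x :=
      (Finset.erase_insert_of_ne h1).symm
    have e2 : insert y D = D ∪ insert y (D.erase x) := by
      ext z
      simp only [Finset.mem_erase, Finset.mem_union, Finset.mem_insert]
      tauto
    refine ⟨⟨hy, ?_⟩, Ne.symm h1, Finset.mem_insert_of_mem h4, by rw [← e]; exact h3⟩
    rw [e2]; exact hD.union h3

theorem ff_step {D : Finset (Box m)} (hD : IsLow D) (r N : ℕ)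
    (h : ∑ x ∈ Rem D, ∑ y ∈ Add (D.erase x), ff r (insert y (D.erase x)) = N * ff r D) :
    ∑ y ∈ Add D, ff (r + 1) (insert y D) = (N + m) * ff r D := by
  have e1 : ∑ y ∈ Add D, ff (r + 1) (insert y D) =
      (Add D).card * ff r D +
        ∑ y ∈ Add D, ∑ x ∈ (Rem (insert y D)).erase y, ff r ((insert y D).erase x) := by
    rw [Finset.card_eq_sum_ones, Finset.sum_mul, ← Finset.sum_add_distrib]
    refine Finset.sum_congr rfl fun y hy => ?_
    have hy' := mem_Add.1 hy
    have he : (insert y D).erase y = D := Finset.erase_insert hy'.1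
    have hm : y ∈ Rem (insert y D) :=
      mem_Rem.2 ⟨Finset.mem_insert_self _ _, by rw [he]; exact hD⟩
    show ∑ x ∈ Rem (insert y D), ff r ((insert y D).erase x) = _
    rw [← Finset.add_sum_erase _ _ hm, he, one_mul]
  have e2 : ∑ x ∈ Rem D, ∑ y ∈ Add (D.erase x), ff r (insert y (D.erase x)) =
      (Rem D).card * ff r D +
        ∑ x ∈ Rem D, ∑ y ∈ (Add (D.erase x)).erase x, ff r (insert y (D.erase x)) := by
    rw [Finset.card_eq_sum_ones, Finset.sum_mul, ← Finset.sum_add_distrib]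
    refine Finset.sum_congr rfl fun x hx => ?_
    have hx' := mem_Rem.1 hx
    have he : insert x (D.erase x) = D := Finset.insert_erase hx'.1
    have hm : x ∈ Add (D.erase x) :=
      mem_Add.2 ⟨Finset.notMem_erase _ _, by rw [he]; exact hD⟩
    rw [← Finset.add_sum_erase _ _ hm, he, one_mul]
  have e3 : ∑ y ∈ Add D, ∑ x ∈ (Rem (insert y D)).erase y, ff r ((insert y D).erase x) =
      ∑ x ∈ Rem D, ∑ y ∈ (Add (D.erase x)).erase x, ff r (insert y (D.erase x)) := by
    rw [Finset.sum_comm' (s' := fun x => (Add (D.erase x)).erase x) (t' := Rem D)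
      (fun y x => swap_pairs hD x y)]
    refine Finset.sum_congr rfl fun x hx => Finset.sum_congr rfl fun y hy => ?_
    rw [Finset.erase_insert_of_ne (Finset.mem_erase.1 hy).1]
  rw [e1, e3, card_Add hD]
  rw [e2] at h
  linarith

theorem ff_add (r : ℕ) : ∀ D : Finset (Box m), IsLow D → D.card = r →
    ∑ y ∈ Add D, ff (r + 1) (insert y D) = m * (r + 1) * ff r D := by
  induction r with
  | zero =>
    intro D hD hc
    have : D = ∅ := Finset.card_eq_zero.1 hc
    subst this
    rw [ff_step hD 0 0 (by simp [Rem])]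
    ring
  | succ r ih =>
    intro D hD hc
    rw [ff_step hD (r + 1) (m * (r + 1))]
    · ring
    · show _ = m * (r + 1) * ∑ x ∈ Rem D, ff r (D.erase x)
      rw [Finset.mul_sum]
      refine Finset.sum_congr rfl fun x hx => ?_
      have hx' := mem_Rem.1 hx
      exact ih _ hx'.2 (by rw [Finset.card_erase_of_mem hx'.1]; omega)

variable [NeZero m]

theorem tab_sum (r : ℕ) (g : Finset (Box m) → ℕ) :
    ∑ Z : Tab m (r + 1), g (pre (r + 1) Z.1) =
      ∑ Z : Tab m r, ∑ y ∈ Add (pre r Z.1), g (insert y (pre r Z.1)) := by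
  have hdown : ∀ Z : Tab m (r + 1), SU r (Function.update Z.1 r dflt) := fun Z =>
    (Z.2.1.mono (Nat.le_succ r)).congr fun i hi => (Function.update_of_ne (by omega) _ _).symm
  have hpre : ∀ (T : ℕ → Box m) (y : Box m), pre r (Function.update T r y) = pre r T :=
    fun T y => pre_congr fun i hi => Function.update_of_ne (by omega) _ _
  rw [Finset.sum_sigma']
  refine Finset.sum_bij'
    (fun Z _ => ⟨⟨Function.update Z.1 r dflt, hdown Z, fun i hi => ?_⟩, Z.1 r⟩)
    (fun p hp => ⟨Function.update p.1.1 r p.2, ?_, fun i hi => ?_⟩) ?_ ?_ ?_ ?_ ?_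
  · by_cases h : i = r
    · subst h; exact Function.update_self _ _ _
    · rw [Function.update_of_ne h]; exact Z.2.2 i (by omega)
  · have hy := mem_Add.1 (Finset.mem_sigma.1 hp).2
    refine SU_succ.2 ⟨p.1.2.1.congr fun i hi => (Function.update_of_ne (by omega) _ _).symm, ?_, ?_⟩
    · rw [hpre, Function.update_self]; exact hy.1
    · rw [pre_succ, hpre, Function.update_self]; exact hy.2
  · rw [Function.update_of_ne (by omega)]; exact p.1.2.2 i (by omega)
  · intro Z _
    refine Finset.mem_sigma.2 ⟨Finset.mem_univ _, mem_Add.2 ?_⟩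
    have := SU_succ.1 Z.2.1
    simp only [hpre]
    rw [← pre_succ]
    exact this.2
  · intro p _; exact Finset.mem_univ _
  · intro Z _
    apply Subtype.ext
    simp
  · rintro ⟨Z, y⟩ hp
    have hz : Function.update Z.1 r dflt = Z.1 := by
      rw [Function.update_eq_self_iff]; exact (Z.2.2 r le_rfl).symm
    have e1 : (⟨Function.update (Function.update Z.1 r y) r dflt, by
        rw [Function.update_idem, hz]; exact Z.2⟩ : Tab m r) = Z := by
      apply Subtype.ext
      show Function.update (Function.update Z.1 r y) r dflt = Z.1
      rw [Function.update_idem, hz]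
    simp only [Function.update_self]
    exact congrArg (fun w => (⟨w, y⟩ : Σ _ : Tab m r, Box m)) e1
  · intro Z _
    simp only [hpre]
    rw [pre_succ]

theorem tab_zero (D : Finset (Box m)) (Z : Tab m 0) : pre 0 Z.1 = D ↔ D = ∅ := by
  rw [pre_zero]; exact eq_comm

theorem card_tab_zero : Fintype.card (Tab m 0) = 1 := by
  rw [Fintype.card_eq_one_iff]
  refine ⟨⟨fun _ => dflt, SU_zero _, fun _ _ => rfl⟩, fun Z => ?_⟩
  apply Subtype.ext
  funext i
  exact Z.2.2 i (Nat.zero_le _)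

theorem ff_card (r : ℕ) : ∀ D : Finset (Box m), IsLow D →
    ff r D = ∑ Z : Tab m r, if pre r Z.1 = D then 1 else 0 := by
  induction r with
  | zero =>
    intro D _
    simp only [tab_zero]
    rw [Finset.sum_const, Finset.card_univ, card_tab_zero, one_smul]
    rfl
  | succ r ih =>
    intro D hD
    rw [tab_sum r (fun E => if E = D then 1 else 0)]
    show ∑ x ∈ Rem D, ff r (D.erase x) = _
    have e1 : ∑ x ∈ Rem D, ff r (D.erase x) =
        ∑ x ∈ Rem D, ∑ Z : Tab m r, if pre r Z.1 = D.erase x then 1 else 0 :=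
      Finset.sum_congr rfl fun x hx => ih _ (mem_Rem.1 hx).2
    rw [e1, Finset.sum_comm]
    refine Finset.sum_congr rfl fun Z _ => ?_
    have hZ := Z.2.1.2 r le_rfl
    rw [← Finset.card_filter, ← Finset.card_filter]
    congr 1
    ext x
    simp only [Finset.mem_filter, mem_Rem, mem_Add]
    constructor
    · rintro ⟨⟨h1, h2⟩, h3⟩
      have e : insert x (pre r Z.1) = D := by rw [h3]; exact Finset.insert_erase h1
      exact ⟨⟨by rw [h3]; exact Finset.notMem_erase _ _, by rw [e]; exact hD⟩, e⟩
    · rintro ⟨⟨h1, h2⟩, rfl⟩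
      have e := Finset.erase_insert h1
      exact ⟨⟨Finset.mem_insert_self _ _, by rw [e]; exact hZ⟩, e.symm⟩

theorem ff_total (r : ℕ) : ∑ Z : Tab m r, ff r (pre r Z.1) = m ^ r * r.factorial := by
  induction r with
  | zero =>
    simp only [pre_zero, ff, if_true]
    rw [Finset.sum_const, Finset.card_univ, card_tab_zero]
    simp
  | succ r ih =>
    rw [tab_sum r (ff (r + 1))]
    have : ∀ Z : Tab m r, ∑ y ∈ Add (pre r Z.1), ff (r + 1) (insert y (pre r Z.1)) =
        m * (r + 1) * ff r (pre r Z.1) :=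
      fun Z => ff_add r _ (Z.2.1.2 r le_rfl) Z.2.1.card
    simp only [this]
    rw [← Finset.mul_sum, ih, Nat.factorial_succ]
    ring

theorem pair_count (n : ℕ) :
    Fintype.card {p : Tab m n × Tab m n // pre n p.1.1 = pre n p.2.1} =
      m ^ n * n.factorial := by
  rw [← ff_total, Fintype.card_subtype, Finset.card_filter, ← Finset.univ_product_univ,
    Finset.sum_product_right]
  refine Finset.sum_congr rfl fun Z _ => ?_
  rw [ff_card n _ (Z.2.1.2 n le_rfl)]

end Counting

/-! ### Faithfulness of the seminormal representation -/

section Faithful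

variable {F : Type} [Field F] {m n : ℕ} [NeZero m]

theorem rho_injective (hn : 0 < n) {v : Fin m → F} {q : F} (hq : q ≠ 0)
    (h1 : ∀ i : ℤ, i.natAbs < n → ∀ j j' : Fin m, j ≠ j' → q ^ i * v j - v j' ≠ 0)
    (h2 : ∀ i : ℕ, 1 ≤ i → i < n → (∑ j ∈ Finset.range (i + 1), q ^ j) ≠ 0) :
    Function.Injective (rho hq h1 h2) := by
  let P := {p : Tab m n × Tab m n // pre n p.1.1 = pre n p.2.1}
  have hex : ∀ p : P, ∃ a : (CH F m n v q)ᵐᵒᵖ, ∀ Z : Tab m n,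
      rho hq h1 h2 a (Finsupp.single Z 1) =
        if Z = p.1.2 then Finsupp.single p.1.1 1 else 0 :=
    fun p => rho_mu hn hq h1 h2 p.1.1 p.1.2 p.2
  choose E hE using hex
  have hev : ∀ (c : P → F) (p : P),
      rho hq h1 h2 (∑ r, c r • E r) (Finsupp.single p.1.2 1) p.1.1 = c p := by
    intro c p
    rw [map_sum, LinearMap.sum_apply, Finsupp.finsetSum_apply, Finset.sum_eq_single p]
    · rw [map_smul, LinearMap.smul_apply, hE, if_pos rfl, Finsupp.smul_apply,
        Finsupp.single_eq_same, smul_eq_mul, mul_one]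
    · intro r _ hr
      rw [map_smul, LinearMap.smul_apply, hE, Finsupp.smul_apply]
      split_ifs with h
      · rw [Finsupp.single_eq_of_ne', smul_zero]
        intro h'
        exact hr (Subtype.ext (Prod.ext h' h.symm))
      · simp
    · intro h
      exact absurd (Finset.mem_univ p) h
  have hli : LinearIndependent F E := by
    rw [Fintype.linearIndependent_iff]
    intro c hc p
    rw [← hev c p, hc, map_zero]
    rfl
  obtain ⟨hfin, hle⟩ := CH_dim hn v hq
  let e : CH F m n v q ≃ₗ[F] (CH F m n v q)ᵐᵒᵖ := MulOpposite.opLinearEquiv F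
  have hfin' : Module.Finite F (CH F m n v q)ᵐᵒᵖ := Module.Finite.equiv e
  have hfr := e.finrank_eq
  have hcard : Fintype.card P = m ^ n * n.factorial := pair_count n
  have hle2 := hli.fintype_card_le_finrank
  have hspan : Submodule.span F (Set.range E) = ⊤ := by
    apply hli.span_eq_top_of_card_eq_finrank'
    omega
  rw [injective_iff_map_eq_zero]
  intro a ha
  have hmem : a ∈ Submodule.span F (Set.range E) := by rw [hspan]; trivial
  obtain ⟨c, rfl⟩ := (Submodule.mem_span_range_iff_exists_fun F).1 hmem
  apply Finset.sum_eq_zero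
  intro p _
  rw [← hev c p, ha]
  simp

end Faithful

/-! ### Simple modules of an algebra of block matrices -/

section Blocks

universe uv uw

variable {F A X I : Type} [Field F] [Ring A] [Algebra F A]

/-- The representation space of `ρ`, seen as an `A`-module. -/
def SM (_ : A →ₐ[F] Module.End F (X →₀ F)) : Type := X →₀ F

instance (ρ : A →ₐ[F] Module.End F (X →₀ F)) : AddCommGroup (SM ρ) :=
  inferInstanceAs (AddCommGroup (X →₀ F))

instance (ρ : A →ₐ[F] Module.End F (X →₀ F)) : Module A (SM ρ) :=
  Module.compHom (X →₀ F) ρ.toRingHom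

theorem SM_smul (ρ : A →ₐ[F] Module.End F (X →₀ F)) (a : A) (z : SM ρ) :
    a • z = ρ a (show X →₀ F from z) := rfl

theorem shape_gen {ρ : A →ₐ[F] Module.End F (X →₀ F)} {shape : X → I}
    (hsh : ∀ a x y, shape x ≠ shape y → ρ a (Finsupp.single x 1) y = 0) (i : I) (a : A)
    (z : X →₀ F) (hz : ∀ y, shape y ≠ i → z y = 0) (y : X) (hy : shape y ≠ i) :
    ρ a z y = 0 := by
  rw [← Finsupp.sum_single z, Finsupp.sum, map_sum, Finsupp.finsetSum_apply]
  apply Finset.sum_eq_zero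
  intro x _
  by_cases hx : shape x = i
  · have : Finsupp.single x (z x) = z x • Finsupp.single x (1 : F) := by simp
    rw [this, map_smul, Finsupp.smul_apply, hsh a x y (by rw [hx]; exact fun h => hy h.symm),
      smul_zero]
  · rw [hz x hx]; simp

/-- The block of vectors supported on the fibre of `i`. -/
def Blk (ρ : A →ₐ[F] Module.End F (X →₀ F)) (shape : X → I)
    (hsh : ∀ a x y, shape x ≠ shape y → ρ a (Finsupp.single x 1) y = 0) (i : I) :
    Submodule A (SM ρ) where
  carrier := {z | ∀ y, shape y ≠ i → (show X →₀ F from z) y = 0}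
  add_mem' := by
    intro a b ha hb y hy
    have h1 := ha y hy
    have h2 := hb y hy
    exact (Finsupp.add_apply (show X →₀ F from a) (show X →₀ F from b) y).trans
      (by rw [h1, h2, add_zero])
  zero_mem' := fun y _ => rfl
  smul_mem' := fun a z hz y hy => shape_gen hsh i a z hz y hy

theorem blocks [Fintype X] (ρ : A →ₐ[F] Module.End F (X →₀ F)) (hinj : Function.Injective ρ)
    (shape : X → I) (hsurj : Function.Surjective shape)
    (hsh : ∀ a x y, shape x ≠ shape y → ρ a (Finsupp.single x 1) y = 0)
    (hmu : ∀ x y, shape x = shape y → ∃ a, ∀ z, ρ a (Finsupp.single z 1) =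
      if z = y then Finsupp.single x 1 else 0) :
    ∃ V : I → ModuleCat.{uv} A,
      (∀ i, IsSimpleModule A (V i)) ∧
      (∀ i j : I, Nonempty ((V i) ≃ₗ[A] (V j)) → i = j) ∧
      (∀ W : ModuleCat.{uw} A, IsSimpleModule A W → ∃ i, Nonempty (W ≃ₗ[A] (V i))) ∧
      (∀ i, Module.finrank F (RestrictScalars F A (V i)) = Nat.card {x // shape x = i}) := by
  have hmu' : ∀ x y, ∃ a, shape x = shape y →
      ∀ z : X →₀ F, ρ a z = z y • Finsupp.single x (1 : F) := by
    intro x y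
    by_cases h : shape x = shape y
    · obtain ⟨a, ha⟩ := hmu x y h
      refine ⟨a, fun _ z => ?_⟩
      have : (ρ a : (X →₀ F) →ₗ[F] (X →₀ F)) =
          (Finsupp.lapply y : (X →₀ F) →ₗ[F] F).smulRight (Finsupp.single x (1 : F)) := by
        apply Finsupp.lhom_ext'
        intro w
        apply LinearMap.ext_ring
        simp only [LinearMap.comp_apply, Finsupp.lsingle_apply, LinearMap.smulRight_apply,
          Finsupp.lapply_apply, ha w]
        split_ifs with hw
        · rw [hw, Finsupp.single_eq_same, one_smul]
        · rw [Finsupp.single_eq_of_ne' hw, zero_smul]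
      rw [this]
      rfl
    · exact ⟨0, fun h' => absurd h' h⟩
  choose E hE using hmu'
  let Th : X → (X →₀ F) → A := fun y w => ∑ x, w x • E x y
  have hTh : ∀ y (w : X →₀ F), (∀ x, shape x ≠ shape y → w x = 0) → ∀ z : X →₀ F,
      ρ (Th y w) z = z y • w := by
    intro y w hw z
    simp only [Th]
    rw [map_sum, LinearMap.sum_apply]
    have : ∀ x ∈ Finset.univ, (ρ (w x • E x y)) z = z y • Finsupp.single x (w x) := by
      intro x _
      rw [map_smul, LinearMap.smul_apply]
      by_cases hx : shape x = shape y
      · rw [hE x y hx, smul_comm, Finsupp.smul_single, smul_eq_mul, mul_one]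
      · rw [hw x hx]; simp
    rw [Finset.sum_congr rfl this, ← Finset.smul_sum, Finsupp.univ_sum_single]
  have hTha : ∀ y (w : X →₀ F), (∀ x, shape x ≠ shape y → w x = 0) → ∀ a : A,
      Th y (ρ a w) = a * Th y w := by
    intro y w hw a
    apply hinj
    apply LinearMap.ext
    intro z
    rw [hTh y _ (fun x hx => shape_gen hsh _ a w hw x hx), map_mul, Module.End.mul_apply,
      hTh y w hw, map_smul]
  have hone : (∑ y, E y y) = 1 := by
    apply hinj
    apply LinearMap.ext
    intro z
    rw [map_sum, LinearMap.sum_apply, map_one, Module.End.one_apply]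
    conv_rhs => rw [← Finsupp.univ_sum_single z]
    refine Finset.sum_congr rfl fun y _ => ?_
    rw [hE y y rfl, Finsupp.smul_single, smul_eq_mul, mul_one]
  let B : I → Submodule A (SM ρ) := Blk ρ shape hsh
  have hBmem : ∀ i (z : X →₀ F), (∀ y, shape y ≠ i → z y = 0) →
    (show SM ρ from z) ∈ B i := fun i z hz => hz
  have hBmem' : ∀ i (z : SM ρ), z ∈ B i → (∀ y, shape y ≠ i → (show X →₀ F from z) y = 0) :=
    fun i z hz => hz
  have hbas : ∀ y, (show SM ρ from Finsupp.single y (1 : F)) ∈ B (shape y) := by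
    intro y x hx
    exact Finsupp.single_eq_of_ne (fun h => hx (by rw [h]))
  have hbne : ∀ y, (show SM ρ from Finsupp.single y (1 : F)) ≠ 0 := by
    intro y h
    have : (Finsupp.single y (1 : F)) y = 0 := by
      have h' : (Finsupp.single y (1 : F)) = 0 := h
      rw [h']; rfl
    simp at this
  have hsimple : ∀ i, IsSimpleModule A (B i) := by
    intro i
    rw [isSimpleModule_iff_toSpanSingleton_surjective]
    constructor
    · obtain ⟨y, rfl⟩ := hsurj i
      exact ⟨⟨⟨_, hbas y⟩, 0, fun h => hbne y (congrArg Subtype.val h)⟩⟩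
    · rintro ⟨z, hz⟩ hz0 ⟨w, hw⟩
      have hzne : (show X →₀ F from z) ≠ 0 := fun h => hz0 (Subtype.ext h)
      obtain ⟨y, hy⟩ := Finsupp.ne_iff.1 hzne
      have hy' : (show X →₀ F from z) y ≠ 0 := hy
      have hyi : shape y = i := by
        by_contra h
        exact hy' (hBmem' i z hz y h)
      subst hyi
      refine ⟨Th y (((show X →₀ F from z) y)⁻¹ • (show X →₀ F from w)), Subtype.ext ?_⟩
      have := hTh y (((show X →₀ F from z) y)⁻¹ • (show X →₀ F from w)) (fun x hx => by
        rw [Finsupp.smul_apply, hBmem' _ w hw x hx, smul_zero]) z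
      rw [smul_smul, mul_inv_cancel₀ hy', one_smul] at this
      exact this
  refine ⟨fun i => ModuleCat.of A (ULift.{uv} (B i)), fun i => ?_, ?_, ?_, ?_⟩
  · have := hsimple i
    exact IsSimpleModule.congr (ULift.moduleEquiv : ULift.{uv} (B i) ≃ₗ[A] B i)
  · rintro i j ⟨f⟩
    have f' : B i ≃ₗ[A] B j :=
      ((ULift.moduleEquiv : ULift.{uv} (B i) ≃ₗ[A] B i).symm.trans f).trans
        (ULift.moduleEquiv : ULift.{uv} (B j) ≃ₗ[A] B j)
    by_contra hij
    obtain ⟨y, rfl⟩ := hsurj i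
    let e : B (shape y) := ⟨_, hbas y⟩
    have h1 : E y y • e = e := by
      apply Subtype.ext
      have := hE y y rfl (Finsupp.single y (1 : F))
      rw [Finsupp.single_eq_same, one_smul] at this
      exact this
    have h2 : E y y • f' e = 0 := by
      apply Subtype.ext
      have := hE y y rfl (show X →₀ F from (f' e).1)
      rw [hBmem' j _ (f' e).2 y hij, zero_smul] at this
      exact this
    rw [← map_smul, h1] at h2
    have h3 : e = 0 := by simpa using h2
    exact hbne y (congrArg Subtype.val h3)
  · intro W hW
    have := hW.nontrivial
    obtain ⟨w, hw⟩ := exists_ne (0 : W)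
    have : ∃ y, E y y • w ≠ 0 := by
      by_contra! h
      apply hw
      rw [← one_smul A w, ← hone, Finset.sum_smul]
      exact Finset.sum_eq_zero fun y _ => h y
    obtain ⟨y, hy⟩ := this
    let φ : B (shape y) →ₗ[A] W :=
      { toFun := fun z => Th y (show X →₀ F from z.1) • w
        map_add' := by
          intro z z'
          rw [← add_smul]
          congr 1
          simp only [Th]
          rw [← Finset.sum_add_distrib]
          refine Finset.sum_congr rfl fun x _ => ?_
          rw [← add_smul]
          rfl
        map_smul' := by
          intro a z
          rw [RingHom.id_apply, smul_smul, ← hTha y _ (hBmem' _ _ z.2) a]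
          rfl }
    have hφ : φ ≠ 0 := by
      intro h
      apply hy
      have h0 : φ ⟨_, hbas y⟩ = 0 := by rw [h]; rfl
      have h1 : Th y (Finsupp.single y (1 : F)) = E y y := by
        simp only [Th]
        rw [Finset.sum_eq_single y]
        · simp
        · intro x _ hx
          rw [Finsupp.single_eq_of_ne hx, zero_smul]
        · intro h; exact absurd (Finset.mem_univ y) h
      rw [← h1]
      exact h0
    have := hsimple (shape y)
    refine ⟨shape y, ⟨?_⟩⟩
    exact (LinearEquiv.ofBijective φ (LinearMap.bijective_of_ne_zero hφ)).symm.trans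
      (ULift.moduleEquiv : ULift.{uv} (B (shape y)) ≃ₗ[A] B (shape y)).symm
  · intro i
    let L : RestrictScalars F A (ULift.{uv} (B i)) →ₗ[F] ({x // shape x = i} → F) :=
      { toFun := fun z x => (show X →₀ F from (show ULift.{uv} (B i) from z).down.1) x.1
        map_add' := fun z z' => rfl
        map_smul' := by
          intro c z
          funext x
          have h : ρ (algebraMap F A c) (show X →₀ F from (show ULift.{uv} (B i) from z).down.1)
              = c • (show X →₀ F from (show ULift.{uv} (B i) from z).down.1) := by
            rw [AlgHom.commutes]; rfl
          exact DFunLike.congr_fun h x.1 }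
    have hL : Function.Bijective L := by
      constructor
      · rintro ⟨⟨z, hz⟩⟩ ⟨⟨z', hz'⟩⟩ h
        have : z = z' := by
          apply Finsupp.ext (M := F)
          intro x
          by_cases hx : shape x = i
          · exact congrFun h ⟨x, hx⟩
          · rw [hBmem' i z hz x hx, hBmem' i z' hz' x hx]
        subst this
        rfl
      · intro g
        let z : X →₀ F := Finsupp.equivFunOnFinite.symm
          (fun x => if h : shape x = i then g ⟨x, h⟩ else 0)
        have hz : (show SM ρ from z) ∈ B i := by
          apply hBmem
          intro y hy
          simp [z, hy]
        refine ⟨(ULift.up ⟨_, hz⟩ : ULift.{uv} (B i)), ?_⟩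
        funext x
        have : z x.1 = g x := by simp [z, x.2]
        exact this
    have e := (LinearEquiv.ofBijective L hL).finrank_eq
    rw [Module.finrank_fintype_fun_eq_card, ← Nat.card_eq_fintype_card] at e
    exact e

end Blocks

/-! ### Multipartitions and standard tableaux -/

section Translate

variable {m n : ℕ}

/-- The boxes with row lengths `l`, at most `n` rows. -/
def sigBox (l : Fin m → ℕ → ℕ) (n : ℕ) : Finset (Σ _ : Fin m, Σ _ : ℕ, ℕ) :=
  (Finset.univ : Finset (Fin m)).sigma fun c => (Finset.range n).sigma fun a =>
    Finset.range (l c a)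

theorem card_of_rl {D : Finset (Box m)} {l : Fin m → ℕ → ℕ}
    (h : ∀ c a b, (c, a, b) ∈ D ↔ b < l c a) (hb : ∀ c a, n ≤ a → l c a = 0) :
    D.card = ∑ c : Fin m, ∑ a ∈ Finset.range n, l c a := by
  have h1 : (sigBox l n).card = ∑ c : Fin m, ∑ a ∈ Finset.range n, l c a := by
    simp [sigBox, Finset.card_sigma]
  rw [← h1]
  refine Finset.card_nbij' (fun x => ⟨x.1, x.2.1, x.2.2⟩) (fun s => (s.1, s.2.1, s.2.2))
    ?_ ?_ ?_ ?_
  · rintro ⟨c, a, b⟩ hx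
    have hx' := (h c a b).1 hx
    have ha : a < n := by
      by_contra hc
      rw [hb c a (not_lt.1 hc)] at hx'
      omega
    simp [sigBox, ha, hx']
  · rintro ⟨c, a, b⟩ hx
    have hx' : a < n ∧ b < l c a := by simpa [sigBox] using hx
    exact (h c a b).2 hx'.2
  · rintro ⟨c, a, b⟩ _; rfl
  · rintro ⟨c, a, b⟩ _; rfl

/-- The diagram of a multipartition. -/
def diag (Λ : Multipartition m n) : Finset (Box m) :=
  (sigBox Λ.part n).image fun s => (s.1, s.2.1, s.2.2)

theorem mem_diag (Λ : Multipartition m n) (c : Fin m) (a b : ℕ) :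
    (c, a, b) ∈ diag Λ ↔ b < Λ.part c a := by
  simp only [diag, sigBox, Finset.mem_image, Finset.mem_sigma, Finset.mem_univ, true_and,
    Finset.mem_range, Prod.mk.injEq]
  constructor
  · rintro ⟨⟨c', a', b'⟩, ⟨h1, h2⟩, h3, h4, h5⟩
    simp only at h1 h2 h3 h4 h5
    subst h3 h4 h5
    exact h2
  · intro h
    refine ⟨⟨c, a, b⟩, ⟨?_, h⟩, rfl, rfl, rfl⟩
    by_contra hc
    have := Λ.bound c a (not_lt.1 hc)
    omega

theorem diag_low (Λ : Multipartition m n) : IsLow (diag Λ) :=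
  isLow_of_rl Λ.mono (mem_diag Λ)

theorem diag_card (Λ : Multipartition m n) : (diag Λ).card = n :=
  (card_of_rl (mem_diag Λ) Λ.bound).trans Λ.total

theorem mp_ext {Λ M : Multipartition m n} (h : ∀ c a, Λ.part c a = M.part c a) : Λ = M := by
  obtain ⟨p, _, _, _⟩ := Λ
  obtain ⟨p', _, _, _⟩ := M
  have : p = p' := by
    funext c a
    exact h c a
  subst this
  rfl

/-- The multipartition of a lower set. -/
def mkMP (D : Finset (Box m)) (hD : IsLow D) (hc : D.card = n) : Multipartition m n where
  part := rl D
  mono := rl_mono hD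
  bound := by
    intro c i hi
    by_contra h
    have := (hD.bound ((mem_iff_rl hD).2 (Nat.pos_of_ne_zero h))).1
    omega
  total := by
    rw [← card_of_rl (D := D) (fun c a b => mem_iff_rl hD), hc]
    intro c i hi
    by_contra h
    have := (hD.bound ((mem_iff_rl hD).2 (Nat.pos_of_ne_zero h))).1
    omega

theorem nat_eq_of_lt_iff {x y : ℕ} (h : ∀ b, b < x ↔ b < y) : x = y := by
  have h1 := h x
  have h2 := h y
  omega

variable [NeZero m]

/-- The shape of a standard tableau. -/
def shp (Z : Tab m n) : Multipartition m n :=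
  mkMP (pre n Z.1) (Z.2.1.2 n le_rfl) Z.2.1.card

theorem mem_shp (Z : Tab m n) (c : Fin m) (a b : ℕ) :
    (c, a, b) ∈ pre n Z.1 ↔ b < (shp Z).part c a :=
  mem_iff_rl (Z.2.1.2 n le_rfl)

theorem shp_eq_iff (Z : Tab m n) (Λ : Multipartition m n) :
    shp Z = Λ ↔ pre n Z.1 = diag Λ := by
  constructor
  · rintro rfl
    ext ⟨c, a, b⟩
    rw [mem_shp, mem_diag]
  · intro h
    apply mp_ext
    intro c a
    apply nat_eq_of_lt_iff
    intro b
    rw [← mem_shp, h, mem_diag]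

theorem shp_eq_shp (Z Y : Tab m n) : shp Z = shp Y ↔ pre n Z.1 = pre n Y.1 := by
  rw [shp_eq_iff, ← (shp_eq_iff Y (shp Y)).1 rfl]

theorem shp_surj : Function.Surjective (shp : Tab m n → Multipartition m n) := by
  intro Λ
  obtain ⟨T, h1, h2, h3⟩ := exists_SU (dflt : Box m) n (diag Λ) (diag_low Λ) (diag_card Λ)
  exact ⟨⟨T, h1, h3⟩, (shp_eq_iff _ _).2 h2⟩

/-- The entry of a tableau in a box. -/
def ent (Z : Tab m n) (c : Fin m) (a b : ℕ) : ℕ :=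
  if h : ∃ i, i < n ∧ Z.1 i = (c, a, b) then h.choose else 0

theorem ent_spec (Z : Tab m n) {c : Fin m} {a b : ℕ} (h : (c, a, b) ∈ pre n Z.1) :
    ent Z c a b < n ∧ Z.1 (ent Z c a b) = (c, a, b) := by
  have h' := mem_pre.1 h
  rw [ent, dif_pos h']
  exact h'.choose_spec

theorem ent_eq (Z : Tab m n) {c : Fin m} {a b i : ℕ} (hi : i < n) (h : Z.1 i = (c, a, b)) :
    ent Z c a b = i := by
  have h' := ent_spec Z (mem_pre.2 ⟨i, hi, h⟩)
  exact Z.2.1.1 _ _ h'.1 hi (h'.2.trans h.symm)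

/-- The standard tableau of a sequence of boxes. -/
def toStd (Λ : Multipartition m n) (Z : {Z : Tab m n // shp Z = Λ}) : StdTableau Λ where
  entry := ent Z.1
  lt_n := by
    obtain ⟨Z, rfl⟩ := Z
    intro c i j h
    exact (ent_spec Z ((mem_shp Z c i j).2 h)).1
  inj := by
    obtain ⟨Z, rfl⟩ := Z
    intro c i j c' i' j' h h' e
    rw [← (ent_spec Z ((mem_shp Z c i j).2 h)).2, e]
    exact (ent_spec Z ((mem_shp Z c' i' j').2 h')).2
  surj := by
    obtain ⟨Z, rfl⟩ := Z
    intro x hx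
    exact ⟨(Z.1 x).1, (Z.1 x).2.1, (Z.1 x).2.2,
      (mem_shp Z _ _ _).1 (mem_pre.2 ⟨x, hx, rfl⟩), ent_eq Z hx rfl⟩
  row := by
    obtain ⟨Z, rfl⟩ := Z
    intro c i j h
    have h1 := ent_spec Z ((mem_shp Z c i (j + 1)).2 h)
    obtain ⟨l, hl, hl'⟩ := Z.2.1.exists_lt h1.1 h1.2 (a' := i) (b' := j) le_rfl (by omega)
      (by omega)
    show ent Z c i j < ent Z c i (j + 1)
    rw [ent_eq Z (hl.trans h1.1) hl']
    exact hl
  col := by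
    obtain ⟨Z, rfl⟩ := Z
    intro c i j h
    have h1 := ent_spec Z ((mem_shp Z c (i + 1) j).2 h)
    obtain ⟨l, hl, hl'⟩ := Z.2.1.exists_lt h1.1 h1.2 (a' := i) (b' := j) (by omega) le_rfl
      (by omega)
    show ent Z c i j < ent Z c (i + 1) j
    rw [ent_eq Z (hl.trans h1.1) hl']
    exact hl
  outside := by
    obtain ⟨Z, rfl⟩ := Z
    intro c i j h
    rw [← mem_shp, mem_pre] at h
    exact dif_neg h

theorem std_ext {Λ : Multipartition m n} {S T : StdTableau Λ} (h : S.entry = T.entry) :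
    S = T := by
  obtain ⟨p, _, _, _, _, _, _⟩ := S
  obtain ⟨p', _, _, _, _, _, _⟩ := T
  have h' : p = p' := h
  subst h'
  rfl

theorem toStd_bij (Λ : Multipartition m n) : Function.Bijective (toStd Λ) := by
  constructor
  · rintro ⟨Z, hZ⟩ ⟨Y, hY⟩ h
    have he : ∀ c a b, ent Z c a b = ent Y c a b := fun c a b =>
      congrArg (fun T : StdTableau Λ => T.entry c a b) h
    apply Subtype.ext
    apply Subtype.ext
    funext i
    show Z.1 i = Y.1 i
    by_cases hi : i < n
    · obtain ⟨⟨c, a, b⟩, hx⟩ : ∃ x, Z.1 i = x := ⟨_, rfl⟩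
      have h1 := ent_eq Z hi hx
      have h2 : (c, a, b) ∈ pre n Y.1 := by
        rw [← (shp_eq_shp Z Y).1 (hZ.trans hY.symm)]
        exact mem_pre.2 ⟨i, hi, hx⟩
      have h3 := (ent_spec Y h2).2
      rw [← he, h1] at h3
      rw [hx, h3]
    · rw [Z.2.2 i (not_lt.1 hi), Y.2.2 i (not_lt.1 hi)]
  · intro T
    have hs : ∀ x : ℕ, ∃ y : Box m, (x < n → y.2.2 < Λ.part y.1 y.2.1 ∧
        T.entry y.1 y.2.1 y.2.2 = x) ∧ (n ≤ x → y = dflt) := by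
      intro x
      by_cases hx : x < n
      · obtain ⟨c, i, j, h1, h2⟩ := T.surj x hx
        exact ⟨(c, i, j), fun _ => ⟨h1, h2⟩, fun h => by omega⟩
      · exact ⟨dflt, fun h => absurd h hx, fun _ => rfl⟩
    choose Z hZ1 hZ2 using hs
    have hbox : ∀ c a b, b < Λ.part c a → Z (T.entry c a b) = (c, a, b) := by
      intro c a b h
      have h1 := hZ1 _ (T.lt_n c a b h)
      exact T.inj _ _ _ _ _ _ h1.1 h h1.2
    have hSU : SU n Z := by
      constructor
      · intro i j hi hj h
        rw [← (hZ1 i hi).2, ← (hZ1 j hj).2, h]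
      · intro s hs c a b
        rw [mem_pre, mem_pre, mem_pre]
        constructor
        · rintro ⟨i, hi, h⟩
          have h1 := hZ1 i (by omega)
          rw [h] at h1
          have h2 := T.col c a b h1.1
          have h3 := Λ.mono c a
          have h4 := h1.1
          simp only at h1 h4
          exact ⟨T.entry c a b, by omega, hbox c a b (by omega)⟩
        · rintro ⟨i, hi, h⟩
          have h1 := hZ1 i (by omega)
          rw [h] at h1
          have h2 := T.row c a b h1.1
          have h4 := h1.1
          simp only at h1 h4
          exact ⟨T.entry c a b, by omega, hbox c a b (by omega)⟩
    let Y : Tab m n := ⟨Z, hSU, hZ2⟩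
    have hY : shp Y = Λ := by
      rw [shp_eq_iff]
      ext ⟨c, a, b⟩
      rw [mem_diag, mem_pre]
      constructor
      · rintro ⟨i, hi, h⟩
        have h1 := (hZ1 i hi).1
        have h' : Z i = (c, a, b) := h
        rw [h'] at h1
        exact h1
      · intro h
        exact ⟨T.entry c a b, T.lt_n c a b h, hbox c a b h⟩
    refine ⟨⟨Y, hY⟩, std_ext ?_⟩
    funext c a b
    by_cases h : b < Λ.part c a
    · exact ent_eq Y (T.lt_n c a b h) (hbox c a b h)
    · rw [T.outside c a b h]
      exact (toStd Λ ⟨Y, hY⟩).outside c a b h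

end Translate

open MulOpposite in
/-- **Ariki(–Koike).**  Under the separation conditions on the parameters,
there is a family `(V^Λ)`, indexed by the `m`-multipartitions `Λ` of `n`, of pairwise
non-isomorphic simple right `H_n`-modules (i.e. left modules over the opposite algebra)
such that every simple right `H_n`-module is isomorphic to some `V^Λ` and
`dim_k V^Λ` is the number of standard tableaux of shape `Λ`. -/
theorem semisimple_simple_modules [NeZero m] [NeZero n] (hq : q ≠ 0)
    (h1 : ∀ i : ℤ, i.natAbs < n → ∀ j j' : Fin m, j ≠ j' → q ^ i * v j - v j' ≠ 0)
    (h2 : ∀ i : ℕ, 1 ≤ i → i < n → (∑ j ∈ Finset.range (i + 1), q ^ j) ≠ 0) :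
    ∃ V : Multipartition m n → ModuleCat (CH k m n v q)ᵐᵒᵖ,
      (∀ Λ, IsSimpleModule (CH k m n v q)ᵐᵒᵖ (V Λ)) ∧
      (∀ Λ Λ' : Multipartition m n,
        Nonempty ((V Λ) ≃ₗ[(CH k m n v q)ᵐᵒᵖ] (V Λ')) → Λ = Λ') ∧
      (∀ W : ModuleCat (CH k m n v q)ᵐᵒᵖ, IsSimpleModule (CH k m n v q)ᵐᵒᵖ W →
        ∃ Λ, Nonempty (W ≃ₗ[(CH k m n v q)ᵐᵒᵖ] (V Λ))) ∧
      (∀ Λ, Module.finrank k (RestrictScalars k (CH k m n v q)ᵐᵒᵖ (V Λ)) =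
        Nat.card (StdTableau Λ)) := by
  have hn : 0 < n := NeZero.pos n
  obtain ⟨V, hV1, hV2, hV3, hV4⟩ := blocks (rho hq h1 h2) (rho_injective hn hq h1 h2) shp shp_surj
    (fun a x y hxy => pre_of_rho hq h1 h2 a fun h => hxy ((shp_eq_shp x y).2 h))
    (fun x y hxy => rho_mu hn hq h1 h2 x y ((shp_eq_shp x y).1 hxy))
  refine ⟨V, hV1, hV2, hV3, fun Λ => ?_⟩
  rw [hV4 Λ]
  exact Nat.card_eq_of_bijective (toStd Λ) (toStd_bij Λ)

end Cyclo
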